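/- arXiv:1508.04836 — 2 statements merged into one kernel-verified Lean document; each statement's English description precedes it below -/
import Mathlib

section
/- Let (Ω_n, P_n, π_n) be a sequence of finite irreducible reversible Markov chains. If the sequence exhibits a continuous-time cutoff with a cutoff window w_n, then it also exhibits an averaged cutoff with the same cutoff window w_n. -/
open Matrix Filter Asymptotics

/-- `P` is a stochastic matrix. -/
def IsStochastic {Ω : Type*} [Fintype Ω] (P : Matrix Ω Ω ℝ) : Prop :=
  (∀ x y, 0 ≤ P x y) ∧ ∀ x, ∑ y, P x y = 1

/-- `P` is irreducible. -/
def IsIrreducibleMatrix {Ω : Type*} [Fintype Ω] [DecidableEq Ω] (P : Matrix Ω Ω ℝ) : Prop :=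
  ∀ x y, ∃ n : ℕ, 0 < (P ^ n) x y

/-- `μ` is a probability vector. -/
def IsProbVec {Ω : Type*} [Fintype Ω] (μ : Ω → ℝ) : Prop :=
  (∀ x, 0 ≤ μ x) ∧ ∑ x, μ x = 1

/-- The chain `(P, pi)` is reversible. -/
def IsReversible {Ω : Type*} [Fintype Ω] (P : Matrix Ω Ω ℝ) (pi : Ω → ℝ) : Prop :=
  ∀ x y, pi x * P x y = pi y * P y x

/-- A finite irreducible Markov chain `P` with stationary distribution `pi`. -/
def IsMC {Ω : Type*} [Fintype Ω] [DecidableEq Ω] (P : Matrix Ω Ω ℝ) (pi : Ω → ℝ) : Prop :=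
  IsStochastic P ∧ IsIrreducibleMatrix P ∧ IsProbVec pi ∧ pi ᵥ* P = pi

/-- A finite irreducible reversible Markov chain `P` with stationary distribution `pi`. -/
def IsRevMC {Ω : Type*} [Fintype Ω] [DecidableEq Ω] (P : Matrix Ω Ω ℝ) (pi : Ω → ℝ) : Prop :=
  IsMC P pi ∧ IsReversible P pi

/-- Total-variation distance between two measures on a finite set. -/
noncomputable def tvDist {Ω : Type*} [Fintype Ω] (μ ν : Ω → ℝ) : ℝ :=
  (∑ x, |μ x - ν x|) / 2

/-- The lazy version `(I + P)/2` of `P`. -/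
noncomputable def lazyM {Ω : Type*} [Fintype Ω] [DecidableEq Ω] (P : Matrix Ω Ω ℝ) :
    Matrix Ω Ω ℝ :=
  (2 : ℝ)⁻¹ • (1 + P)

/-- `d_c(t, μ)`: TV distance from stationarity of the continuous-time chain at time `t`,
started from `μ`. -/
noncomputable def contDist {Ω : Type*} [Fintype Ω] [DecidableEq Ω] (P : Matrix Ω Ω ℝ) (pi : Ω → ℝ)
    (t : ℝ) (μ : Ω → ℝ) : ℝ :=
  tvDist (fun y => ∑' k : ℕ, Real.exp (-t) * t ^ k / (Nat.factorial k) * (μ ᵥ* (P ^ k)) y) pi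

/-- `d_L(t, μ)`: TV distance from stationarity of the lazy chain at (discrete) time `t`,
started from `μ`. -/
noncomputable def lazyDist {Ω : Type*} [Fintype Ω] [DecidableEq Ω] (P : Matrix Ω Ω ℝ)
    (pi : Ω → ℝ) (t : ℝ) (μ : Ω → ℝ) : ℝ :=
  tvDist (μ ᵥ* (lazyM P ^ ⌊t⌋₊)) pi

/-- `d_ave(t, μ)`: TV distance from stationarity of the averaged chain at (discrete) time `t`,
started from `μ`. -/
noncomputable def aveDist {Ω : Type*} [Fintype Ω] [DecidableEq Ω] (P : Matrix Ω Ω ℝ) (pi : Ω → ℝ)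
    (t : ℝ) (μ : Ω → ℝ) : ℝ :=
  tvDist (fun y => ((μ ᵥ* (P ^ ⌊t⌋₊)) y + (μ ᵥ* (P ^ (⌊t⌋₊ + 1))) y) / 2) pi

/-- The point mass at `x`. -/
noncomputable def deltaMass {Ω : Type*} [DecidableEq Ω] (x : Ω) : Ω → ℝ :=
  fun y => if y = x then 1 else 0

/-- Worst-case continuous-time distance `d_c(t)`. -/
noncomputable def contDistMax {Ω : Type*} [Fintype Ω] [DecidableEq Ω] (P : Matrix Ω Ω ℝ)
    (pi : Ω → ℝ) (t : ℝ) : ℝ :=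
  ⨆ x : Ω, contDist P pi t (deltaMass x)

/-- Worst-case lazy distance `d_L(t)`. -/
noncomputable def lazyDistMax {Ω : Type*} [Fintype Ω] [DecidableEq Ω] (P : Matrix Ω Ω ℝ)
    (pi : Ω → ℝ) (t : ℝ) : ℝ :=
  ⨆ x : Ω, lazyDist P pi t (deltaMass x)

/-- Worst-case averaged distance `d_ave(t)`. -/
noncomputable def aveDistMax {Ω : Type*} [Fintype Ω] [DecidableEq Ω] (P : Matrix Ω Ω ℝ)
    (pi : Ω → ℝ) (t : ℝ) : ℝ :=
  ⨆ x : Ω, aveDist P pi t (deltaMass x)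

/-- `φ_{α,C}(t) = t + ⌈C t^{(1+2α)/2} √(α log t)⌉`. -/
noncomputable def phiAC (α C t : ℝ) : ℝ :=
  t + ((⌈C * t ^ ((1 + 2 * α) / 2) * Real.sqrt (α * Real.log t)⌉ : ℤ) : ℝ)

/-- `ψ_{α,C}(x) = min (1, x + C |log(2x)|^{-α})`. -/
noncomputable def psiAC (α C x : ℝ) : ℝ :=
  min 1 (x + C * |Real.log (2 * x)| ^ (-α))

/-- `t_c(ε)`, the `ε`-mixing time of the continuous-time chain. -/
noncomputable def contMix {Ω : Type*} [Fintype Ω] [DecidableEq Ω] (P : Matrix Ω Ω ℝ)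
    (pi : Ω → ℝ) (ε : ℝ) : ℝ :=
  sInf {t : ℝ | 0 ≤ t ∧ contDistMax P pi t ≤ ε}

/-- `t_L(ε)`, the `ε`-mixing time of the lazy chain. -/
noncomputable def lazyMix {Ω : Type*} [Fintype Ω] [DecidableEq Ω] (P : Matrix Ω Ω ℝ)
    (pi : Ω → ℝ) (ε : ℝ) : ℕ :=
  sInf {t : ℕ | lazyDistMax P pi t ≤ ε}

/-- `t_ave(ε)`, the `ε`-mixing time of the averaged chain. -/
noncomputable def aveMix {Ω : Type*} [Fintype Ω] [DecidableEq Ω] (P : Matrix Ω Ω ℝ)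
    (pi : Ω → ℝ) (ε : ℝ) : ℕ :=
  sInf {t : ℕ | aveDistMax P pi t ≤ ε}

/-- The sequence of continuous-time chains exhibits cutoff. -/
def ContCutoff {Ω : ℕ → Type} [∀ n, Fintype (Ω n)] [∀ n, DecidableEq (Ω n)]
    (P : ∀ n, Matrix (Ω n) (Ω n) ℝ) (pi : ∀ n, Ω n → ℝ) : Prop :=
  ∀ ε : ℝ, 0 < ε → ε < 1 →
    Tendsto (fun n => contMix (P n) (pi n) ε / contMix (P n) (pi n) (1 - ε)) atTop (nhds 1)

/-- The sequence of lazy chains exhibits cutoff. -/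
def LazyCutoff {Ω : ℕ → Type} [∀ n, Fintype (Ω n)] [∀ n, DecidableEq (Ω n)]
    (P : ∀ n, Matrix (Ω n) (Ω n) ℝ) (pi : ∀ n, Ω n → ℝ) : Prop :=
  ∀ ε : ℝ, 0 < ε → ε < 1 →
    Tendsto (fun n => (lazyMix (P n) (pi n) ε : ℝ) / (lazyMix (P n) (pi n) (1 - ε) : ℝ))
      atTop (nhds 1)

/-- The sequence of averaged chains exhibits cutoff. -/
def AveCutoff {Ω : ℕ → Type} [∀ n, Fintype (Ω n)] [∀ n, DecidableEq (Ω n)]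
    (P : ∀ n, Matrix (Ω n) (Ω n) ℝ) (pi : ∀ n, Ω n → ℝ) : Prop :=
  ∀ ε : ℝ, 0 < ε → ε < 1 →
    Tendsto (fun n => (aveMix (P n) (pi n) ε : ℝ) / (aveMix (P n) (pi n) (1 - ε) : ℝ))
      atTop (nhds 1)

/-- The sequence of continuous-time chains exhibits cutoff with window `w`. -/
def ContCutoffWindow {Ω : ℕ → Type} [∀ n, Fintype (Ω n)] [∀ n, DecidableEq (Ω n)]
    (P : ∀ n, Matrix (Ω n) (Ω n) ℝ) (pi : ∀ n, Ω n → ℝ) (w : ℕ → ℝ) : Prop :=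
  ContCutoff P pi ∧
  (fun n => w n) =o[atTop] (fun n => contMix (P n) (pi n) (1 / 4)) ∧
  ∀ ε : ℝ, 0 < ε → ε ≤ 1 / 4 → ∃ Cε : ℝ, 0 < Cε ∧
    ∀ n, contMix (P n) (pi n) ε - contMix (P n) (pi n) (1 - ε) ≤ Cε * w n

/-- The sequence of averaged chains exhibits cutoff with window `w`. -/
def AveCutoffWindow {Ω : ℕ → Type} [∀ n, Fintype (Ω n)] [∀ n, DecidableEq (Ω n)]
    (P : ∀ n, Matrix (Ω n) (Ω n) ℝ) (pi : ∀ n, Ω n → ℝ) (w : ℕ → ℝ) : Prop :=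
  AveCutoff P pi ∧
  (fun n => w n) =o[atTop] (fun n => (aveMix (P n) (pi n) (1 / 4) : ℝ)) ∧
  ∀ ε : ℝ, 0 < ε → ε ≤ 1 / 4 → ∃ Cε : ℝ, 0 < Cε ∧
    ∀ n, (aveMix (P n) (pi n) ε : ℝ) - (aveMix (P n) (pi n) (1 - ε) : ℝ) ≤ Cε * w n


lemma hasSum_congr_mp {f g : ℕ → ℝ} {a : ℝ} (h : ∀ k, f k = g k) (hf : HasSum f a) : HasSum g a := by
  rwa [← funext h]

/-! ### Poisson weights -/

noncomputable def pois (t : ℝ) (k : ℕ) : ℝ := Real.exp (-t) * t ^ k / (Nat.factorial k)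

lemma pois_nonneg {t : ℝ} (ht : 0 ≤ t) (k : ℕ) : 0 ≤ pois t k := by
  unfold pois; positivity

lemma pois_hasSum (t : ℝ) : HasSum (pois t) 1 := by
  have h := (NormedSpace.expSeries_div_hasSum_exp (𝔸 := ℝ) t).mul_left (Real.exp (-t))
  rw [← Real.exp_eq_exp_ℝ, ← Real.exp_add] at h
  rw [neg_add_cancel, Real.exp_zero] at h
  exact hasSum_congr_mp (fun k => by simp only [pois, mul_div_assoc]) h

lemma pois_succ (t : ℝ) (k : ℕ) : ((k + 1 : ℕ) : ℝ) * pois t (k + 1) = t * pois t k := by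
  unfold pois
  rw [Nat.factorial_succ]
  have : (Nat.factorial k : ℝ) ≠ 0 := by positivity
  push_cast
  have h2 : (k : ℝ) + 1 ≠ 0 := by positivity
  field_simp
  ring

lemma pois_shift {t : ℝ} {g : ℕ → ℝ} {a : ℝ} (h : HasSum (fun k => pois t k * g (k + 1)) a) :
    HasSum (fun k : ℕ => (k : ℝ) * pois t k * g k) (t * a) := by
  rw [← hasSum_nat_add_iff' 1]
  have h2 := h.mul_left t
  simp only [Finset.range_one, Finset.sum_singleton, Nat.cast_zero, zero_mul, sub_zero]
  refine hasSum_congr_mp (fun k => ?_) h2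
  rw [pois_succ, mul_assoc]

lemma pois_mean (t : ℝ) : HasSum (fun k : ℕ => (k : ℝ) * pois t k) t := by
  have := pois_shift (t := t) (g := fun _ => 1) (a := 1) (by simpa using pois_hasSum t)
  simpa using this

lemma pois_var (t : ℝ) : HasSum (fun k : ℕ => pois t k * ((k : ℝ) - t) ^ 2) t := by
  have h1 : HasSum (fun k : ℕ => pois t k * (((k + 1 : ℕ) : ℝ))) (t + 1) := by
    have := (pois_mean t).add (pois_hasSum t)
    refine hasSum_congr_mp (fun k => ?_) this
    push_cast; ring
  have h2 := pois_shift (g := fun k : ℕ => (k : ℝ)) h1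
  have h3 := (h2.sub ((pois_mean t).mul_left (2 * t))).add ((pois_hasSum t).mul_left (t ^ 2))
  have e : t * (t + 1) - 2 * t * t + t ^ 2 * 1 = t := by ring
  rw [e] at h3
  refine hasSum_congr_mp (fun k => ?_) h3
  ring

lemma pois_abs_one_sub {t : ℝ} (ht : 0 < t) :
    ∃ a, HasSum (fun k : ℕ => |pois t k - (k : ℝ) * pois t k / t|) a ∧ a ≤ 1 / Real.sqrt t := by
  have hs : 0 < Real.sqrt t := Real.sqrt_pos.2 ht
  have hss : Real.sqrt t * Real.sqrt t = t := Real.mul_self_sqrt ht.le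
  set s := Real.sqrt t
  have h := ((pois_var t).mul_left (1 / (2 * (s * t)))).add ((pois_hasSum t).mul_left (1 / (2 * s)))
  have e : 1 / (2 * (s * t)) * t + 1 / (2 * s) * 1 = 1 / s := by field_simp; ring
  rw [e] at h
  have hb : ∀ k : ℕ, |pois t k - (k : ℝ) * pois t k / t| ≤
      1 / (2 * (s * t)) * (pois t k * ((k : ℝ) - t) ^ 2) + 1 / (2 * s) * pois t k := by
    intro k
    have hp := pois_nonneg ht.le k
    have e1 : pois t k - (k : ℝ) * pois t k / t = pois t k * ((t - k) / t) := by field_simp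
    rw [e1, abs_mul, abs_of_nonneg hp, abs_div, abs_of_pos ht]
    have e2 : 1 / (2 * (s * t)) * (pois t k * ((k : ℝ) - t) ^ 2) + 1 / (2 * s) * pois t k
      = pois t k * ((((k : ℝ) - t) ^ 2 + t) / (2 * s * t)) := by field_simp
    rw [e2]
    refine mul_le_mul_of_nonneg_left ?_ hp
    rw [div_le_div_iff₀ ht (by positivity)]
    have : 2 * (|t - k| * s) ≤ (k - t) ^ 2 + t := by
      have := sq_nonneg (|t - k| - s)
      have h3 : |t - (k : ℝ)| ^ 2 = (t - k) ^ 2 := sq_abs _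
      nlinarith
    nlinarith
  have hsum : Summable (fun k : ℕ => |pois t k - (k : ℝ) * pois t k / t|) :=
    Summable.of_nonneg_of_le (fun _ => abs_nonneg _) hb h.summable
  exact ⟨_, hsum.hasSum, hasSum_le hb hsum.hasSum h⟩

lemma pois_lip {t b : ℝ} (ht : 0 ≤ t) (hb : t ≤ b) :
    ∃ a, HasSum (fun k : ℕ => |pois t k - pois b k|) a ∧ a ≤ 2 * (b - t) := by
  have h := ((pois_hasSum t).add (pois_hasSum b)).sub
    ((pois_hasSum t).mul_left (2 * Real.exp (-(b - t))))
  have hb : ∀ k : ℕ, |pois t k - pois b k| ≤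
      pois t k + pois b k - 2 * Real.exp (-(b - t)) * pois t k := by
    intro k
    have hp := pois_nonneg ht k
    have h1 : Real.exp (-(b - t)) * pois t k ≤ pois b k := by
      unfold pois
      have : Real.exp (-(b - t)) * (Real.exp (-t) * t ^ k / (Nat.factorial k))
        = Real.exp (-b) * t ^ k / (Nat.factorial k) := by
        rw [← mul_div_assoc, ← mul_assoc, ← Real.exp_add]; congr 4; ring
      rw [this]; gcongr
    have h2 : Real.exp (-(b - t)) * pois t k ≤ pois t k := by
      have : Real.exp (-(b - t)) ≤ 1 := Real.exp_le_one_iff.2 (by linarith)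
      nlinarith
    rw [abs_le]; constructor <;> nlinarith
  have hsum : Summable (fun k : ℕ => |pois t k - pois b k|) :=
    Summable.of_nonneg_of_le (fun _ => abs_nonneg _) hb h.summable
  refine ⟨_, hsum.hasSum, (hasSum_le hb hsum.hasSum h).trans ?_⟩
  have := Real.add_one_le_exp (-(b - t))
  linarith

lemma pois_chi {t b : ℝ} (ht : 0 < t) (hb : t ≤ b) (hh : (b - t) ^ 2 ≤ t / 4) :
    ∃ a, HasSum (fun k : ℕ => |pois t k - pois b k|) a ∧ a < 1 := by
  have hq : HasSum (fun k => pois b k ^ 2 / pois t k) (Real.exp ((b - t) ^ 2 / t)) := by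
    have h := (pois_hasSum (b ^ 2 / t)).mul_left (Real.exp ((b - t) ^ 2 / t))
    rw [mul_one] at h
    refine hasSum_congr_mp (fun k => ?_) h
    unfold pois
    have h1 : Real.exp (-(b ^ 2 / t)) = Real.exp (-b) ^ 2 / (Real.exp (-t)
      * Real.exp ((b - t) ^ 2 / t)) := by
      rw [← Real.exp_nat_mul, ← Real.exp_add, ← Real.exp_sub]
      congr 1; push_cast; field_simp; ring
    rw [h1, div_pow]
    have := Real.exp_pos (-t)
    have := Real.exp_pos ((b - t) ^ 2 / t)
    have : (0 : ℝ) < Nat.factorial k := by positivity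
    field_simp
    ring
  have h := ((hq.sub ((pois_hasSum b).mul_left 2)).add (pois_hasSum t)).add
    ((pois_hasSum t).mul_left (1 / 4))
  have hb : ∀ k : ℕ, |pois t k - pois b k| ≤
      pois b k ^ 2 / pois t k - 2 * pois b k + pois t k + 1 / 4 * pois t k := by
    intro k
    have hp : 0 < pois t k := by unfold pois; positivity
    have e : pois b k ^ 2 / pois t k - 2 * pois b k + pois t k + 1 / 4 * pois t k
      = ((pois t k - pois b k) ^ 2 + (pois t k / 2) ^ 2) / pois t k := by field_simp; ring
    rw [e, le_div_iff₀ hp, ← sq_abs (pois t k - pois b k)]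
    nlinarith [sq_nonneg (|pois t k - pois b k| - pois t k / 2)]
  have hsum : Summable (fun k : ℕ => |pois t k - pois b k|) :=
    Summable.of_nonneg_of_le (fun _ => abs_nonneg _) hb h.summable
  refine ⟨_, hsum.hasSum, (hasSum_le hb hsum.hasSum h).trans_lt ?_⟩
  have h1 : Real.exp ((b - t) ^ 2 / t) ≤ Real.exp (1 / 4) := by
    apply Real.exp_le_exp.2
    rw [div_le_iff₀ ht]; linarith
  have h2 : Real.exp (1 / 4) < 3 / 2 := by
    by_contra! hc
    have h3 : Real.exp (1 / 4) ^ 4 = Real.exp 1 := by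
      rw [← Real.exp_nat_mul]; norm_num
    have h4 := Real.exp_one_lt_d9
    have h5 : (3 / 2 : ℝ) ^ 4 ≤ Real.exp (1 / 4) ^ 4 := by gcongr
    norm_num at h5 h4
    linarith
  linarith

/-! ### L2 decay for reversible chains -/

lemma seq_decay (b : ℕ → ℝ) (hb : Antitone b) (hb0 : ∀ k, 0 ≤ b k)
    (hc : Antitone (fun k => b k - 2 * b (k + 1) + b (k + 2))) (n : ℕ) :
    ((n : ℝ) + 1) * (n + 2) * (b n - 2 * b (n + 1) + b (n + 2)) ≤ 2 * b 0 := by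
  have key : ((n : ℝ) + 1) * (n + 2) / 2 * (b n - 2 * b (n + 1) + b (n + 2)) + b (n + 1)
      + (n + 1) * (b (n + 1) - b (n + 2)) ≤ b 0 := by
    induction n with
    | zero => norm_num; linarith
    | succ n ih =>
      have h1 := hc (Nat.le_succ n)
      simp only [Nat.succ_eq_add_one] at h1
      push_cast
      have h2 : ((n : ℝ) + 1 + 1) * (n + 1 + 2) / 2 *
          (b (n + 1) - 2 * b (n + 1 + 1) + b (n + 1 + 2)) ≤ ((n : ℝ) + 1 + 1) * (n + 1 + 2) / 2 *
          (b n - 2 * b (n + 1) + b (n + 2)) := by gcongr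
      refine le_trans ?_ ih
      have e : n + 1 + 1 = n + 2 := rfl
      rw [e] at h2 ⊢
      nlinarith [h2]
  have h1 := hb (Nat.le_succ (n + 1))
  have h2 := hb0 (n + 1)
  simp only [Nat.succ_eq_add_one] at h1
  have h3 : 0 ≤ ((n : ℝ) + 1) * (b (n + 1) - b (n + 2)) := by
    apply mul_nonneg (by positivity); linarith
  nlinarith

section chain
variable {Ω : Type*} [Fintype Ω] [DecidableEq Ω] {P : Matrix Ω Ω ℝ} {pi : Ω → ℝ}

lemma stoch_mulVec_sq (hP : IsStochastic P) (u : Ω → ℝ) (x : Ω) :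
    ((P *ᵥ u) x) ^ 2 ≤ ∑ y, P x y * u y ^ 2 := by
  have h := Finset.sum_nonneg (s := Finset.univ)
    (f := fun y => P x y * (u y - (P *ᵥ u) x) ^ 2)
    (fun y _ => mul_nonneg (hP.1 x y) (sq_nonneg _))
  have e : ∑ y, P x y * (u y - (P *ᵥ u) x) ^ 2 =
      ∑ y, P x y * u y ^ 2 - 2 * (P *ᵥ u) x * ∑ y, P x y * u y + (P *ᵥ u) x ^ 2 * ∑ y, P x y := by
    rw [Finset.mul_sum, Finset.mul_sum, ← Finset.sum_sub_distrib, ← Finset.sum_add_distrib]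
    refine Finset.sum_congr rfl fun y _ => ?_
    ring
  rw [e, hP.2 x] at h
  have e2 : ∑ y, P x y * u y = (P *ᵥ u) x := rfl
  rw [e2] at h
  nlinarith

lemma stat_sum (hs : pi ᵥ* P = pi) (u : Ω → ℝ) : ∑ x, pi x * (P *ᵥ u) x = ∑ x, pi x * u x := by
  have := Matrix.dotProduct_mulVec pi P u
  rw [hs] at this
  exact this

lemma stat_sum_pow (hs : pi ᵥ* P = pi) (u : Ω → ℝ) (k : ℕ) :
    ∑ x, pi x * ((P ^ k) *ᵥ u) x = ∑ x, pi x * u x := by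
  induction k generalizing u with
  | zero => simp
  | succ k ih => rw [pow_succ, ← Matrix.mulVec_mulVec, ih, stat_sum hs]

lemma l2_contr (h : IsMC P pi) (u : Ω → ℝ) :
    ∑ x, pi x * (P *ᵥ u) x ^ 2 ≤ ∑ x, pi x * u x ^ 2 := by
  rw [← stat_sum h.2.2.2 (fun x => u x ^ 2)]
  exact Finset.sum_le_sum fun x _ =>
    mul_le_mul_of_nonneg_left (stoch_mulVec_sq h.1 u x) (h.2.2.1.1 x)

lemma rev_adj (h : IsReversible P pi) (u v : Ω → ℝ) :
    ∑ x, pi x * ((P *ᵥ u) x * v x) = ∑ x, pi x * (u x * (P *ᵥ v) x) := by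
  simp only [Matrix.mulVec, dotProduct, Finset.sum_mul, Finset.mul_sum]
  rw [Finset.sum_comm]
  refine Finset.sum_congr rfl fun y _ => Finset.sum_congr rfl fun x _ => ?_
  have := h x y
  linear_combination (u y * v x) * this

lemma decay (h : IsRevMC P pi) (f : Ω → ℝ) (hf : ∀ x, |f x| ≤ 1) (n : ℕ) :
    ((n : ℝ) + 1) * (n + 2) * ∑ x, pi x * (((P ^ n) *ᵥ f) x - ((P ^ (n + 2)) *ᵥ f) x) ^ 2 ≤ 2 := by
  have hsucc : ∀ k, (P ^ (k + 1)) *ᵥ f = P *ᵥ ((P ^ k) *ᵥ f) := by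
    intro k; rw [pow_succ', Matrix.mulVec_mulVec]
  set v : ℕ → Ω → ℝ := fun k => (P ^ k) *ᵥ f with hv
  set b : ℕ → ℝ := fun k => ∑ x, pi x * v k x ^ 2 with hbd
  have hvs : ∀ k, v (k + 1) = P *ᵥ v k := hsucc
  have hc : ∀ k, ∑ x, pi x * (v k x - v (k + 2) x) ^ 2 = b k - 2 * b (k + 1) + b (k + 2) := by
    intro k
    have h1 : ∑ x, pi x * (v (k + 2) x * v k x) = b (k + 1) := by
      rw [hvs (k + 1), rev_adj h.2, ← hvs k]
      refine Finset.sum_congr rfl fun x _ => ?_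
      ring
    rw [← h1]
    simp only [hbd]
    rw [Finset.mul_sum, ← Finset.sum_sub_distrib, ← Finset.sum_add_distrib]
    refine Finset.sum_congr rfl fun y _ => ?_
    ring
  have hba : Antitone b := antitone_nat_of_succ_le fun k => by
    simp only [hbd]; rw [hvs]; exact l2_contr h.1 _
  have hb0 : ∀ k, 0 ≤ b k := fun k =>
    Finset.sum_nonneg fun x _ => mul_nonneg (h.1.2.2.1.1 x) (sq_nonneg _)
  have hca : Antitone (fun k => b k - 2 * b (k + 1) + b (k + 2)) :=
    antitone_nat_of_succ_le fun k => by
      rw [← hc, ← hc]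
      have := l2_contr h.1 (v k - v (k + 2))
      rw [Matrix.mulVec_sub, ← hvs, ← hvs] at this
      simpa using this
  have hb1 : b 0 ≤ 1 := by
    rw [← h.1.2.2.1.2]
    refine Finset.sum_le_sum fun x _ => ?_
    have h1 := h.1.2.2.1.1 x
    have h2 : v 0 x = f x := by simp [hv]
    rw [h2, ← sq_abs]
    have h3 : |f x| ^ 2 ≤ 1 := pow_le_one₀ (abs_nonneg _) (hf x)
    nlinarith
  have := seq_decay b hba hb0 hca n
  rw [← hc] at this
  linarith

lemma decay_l1 (h : IsRevMC P pi) (f : Ω → ℝ) (hf : ∀ x, |f x| ≤ 1) (n : ℕ) :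
    ∑ x, pi x * |((P ^ n) *ᵥ f) x - ((P ^ (n + 2)) *ᵥ f) x| ≤ 2 / ((n : ℝ) + 1) := by
  have hd := decay h f hf n
  have hn : (0 : ℝ) < (n : ℝ) + 1 := by positivity
  set S := ∑ x, pi x * (((P ^ n) *ᵥ f) x - ((P ^ (n + 2)) *ᵥ f) x) ^ 2 with hS
  have hS0 : 0 ≤ S := Finset.sum_nonneg fun x _ => mul_nonneg (h.1.2.2.1.1 x) (sq_nonneg _)
  have h1 : ∑ x, pi x * |((P ^ n) *ᵥ f) x - ((P ^ (n + 2)) *ᵥ f) x| ≤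
      ((n : ℝ) + 1) / 2 * S + 1 / (2 * ((n : ℝ) + 1)) * ∑ x, pi x := by
    rw [hS, Finset.mul_sum, Finset.mul_sum, ← Finset.sum_add_distrib]
    refine Finset.sum_le_sum fun x _ => ?_
    have hp := h.1.2.2.1.1 x
    set a := ((P ^ n) *ᵥ f) x - ((P ^ (n + 2)) *ᵥ f) x
    have h3 : |a| ≤ ((n : ℝ) + 1) / 2 * a ^ 2 + 1 / (2 * ((n : ℝ) + 1)) := by
      have e : ((n : ℝ) + 1) / 2 * a ^ 2 + 1 / (2 * ((n : ℝ) + 1))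
        = (((n : ℝ) + 1) ^ 2 * |a| ^ 2 + 1) / (2 * ((n : ℝ) + 1)) := by
        rw [sq_abs]; field_simp
      rw [e, le_div_iff₀ (by positivity)]
      nlinarith [sq_nonneg (((n : ℝ) + 1) * |a| - 1)]
    nlinarith
  rw [h.1.2.2.1.2] at h1
  refine h1.trans ?_
  rw [le_div_iff₀ hn]
  have : (((n : ℝ) + 1) / 2 * S + 1 / (2 * ((n : ℝ) + 1)) * 1) * (n + 1)
    = ((n : ℝ) + 1) ^ 2 * S / 2 + 1 / 2 := by field_simp
  rw [this]
  nlinarith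

end chain

/-! ### The heat kernel -/

section chain
variable {Ω : Type*} [Fintype Ω] [DecidableEq Ω] {P : Matrix Ω Ω ℝ} {pi : Ω → ℝ}

noncomputable def hmat (P : Matrix Ω Ω ℝ) (t : ℝ) : Matrix Ω Ω ℝ :=
  fun x y => ∑' k : ℕ, pois t k * (P ^ k) x y

lemma mix_l1 {v : ℕ → Ω → ℝ} {M : Ω → ℝ} {c : ℕ → ℝ} {a : ℝ}
    (hM : ∀ y, HasSum (fun k => v k y) (M y)) (hc : ∀ k, ∑ y, |v k y| ≤ c k) (ha : HasSum c a) :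
    ∑ y, |M y| ≤ a := by
  set σ : Ω → ℝ := fun y => if 0 ≤ M y then 1 else -1 with hσ
  have h1 : ∀ y, |M y| = σ y * M y := by
    intro y
    simp only [hσ]
    split_ifs with h
    · rw [abs_of_nonneg h, one_mul]
    · rw [abs_of_neg (not_le.1 h)]; ring
  have h2 : HasSum (fun k => ∑ y, σ y * v k y) (∑ y, σ y * M y) :=
    hasSum_sum fun y _ => (hM y).mul_left _
  rw [Finset.sum_congr rfl fun y _ => h1 y]
  refine hasSum_le (fun k => ?_) h2 ha
  refine le_trans (Finset.sum_le_sum fun y _ => ?_) (hc k)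
  simp only [hσ]
  split_ifs with h
  · rw [one_mul]; exact le_abs_self _
  · rw [neg_one_mul]; exact neg_le_abs _

lemma stoch_mul {Q : Matrix Ω Ω ℝ} (hP : IsStochastic P) (hQ : IsStochastic Q) :
    IsStochastic (P * Q) := by
  refine ⟨fun x y => Finset.sum_nonneg fun z _ => mul_nonneg (hP.1 _ _) (hQ.1 _ _), fun x => ?_⟩
  simp only [Matrix.mul_apply]
  rw [Finset.sum_comm]
  simp only [← Finset.mul_sum, hQ.2, mul_one, hP.2]

lemma stoch_pow (hP : IsStochastic P) (k : ℕ) : IsStochastic (P ^ k) := by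
  induction k with
  | zero =>
    rw [pow_zero]
    refine ⟨fun x y => ?_, fun x => ?_⟩
    · rw [Matrix.one_apply]; split_ifs <;> norm_num
    · simp [Matrix.one_apply]
  | succ k ih => rw [pow_succ]; exact stoch_mul ih hP

lemma stoch_le_one (hP : IsStochastic P) (x y : Ω) : P x y ≤ 1 := by
  rw [← hP.2 x]
  exact Finset.single_le_sum (f := fun y => P x y) (fun y _ => hP.1 x y) (Finset.mem_univ y)

lemma stoch_contr {Q : Matrix Ω Ω ℝ} (hQ : IsStochastic Q) (v : Ω → ℝ) :
    ∑ y, |(v ᵥ* Q) y| ≤ ∑ y, |v y| := by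
  calc ∑ y, |(v ᵥ* Q) y| ≤ ∑ y, ∑ x, |v x| * Q x y := by
        refine Finset.sum_le_sum fun y _ => ?_
        simp only [Matrix.vecMul, dotProduct]
        refine (Finset.abs_sum_le_sum_abs _ _).trans (Finset.sum_le_sum fun x _ => ?_)
        rw [abs_mul, abs_of_nonneg (hQ.1 x y)]
    _ = ∑ y, |v y| := by
        rw [Finset.sum_comm]
        simp only [← Finset.mul_sum, hQ.2, mul_one]

lemma stoch_mulVec_abs {Q : Matrix Ω Ω ℝ} (hQ : IsStochastic Q) {u : Ω → ℝ} {c : ℝ}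
    (hu : ∀ y, |u y| ≤ c) (x : Ω) : |(Q *ᵥ u) x| ≤ c := by
  calc |(Q *ᵥ u) x| ≤ ∑ y, Q x y * c := by
        simp only [Matrix.mulVec, dotProduct]
        refine (Finset.abs_sum_le_sum_abs _ _).trans (Finset.sum_le_sum fun y _ => ?_)
        rw [abs_mul, abs_of_nonneg (hQ.1 x y)]
        exact mul_le_mul_of_nonneg_left (hu y) (hQ.1 x y)
    _ = c := by rw [← Finset.sum_mul, hQ.2, one_mul]

lemma stat_pow (hs : pi ᵥ* P = pi) (k : ℕ) : pi ᵥ* (P ^ k) = pi := by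
  induction k with
  | zero => simp
  | succ k ih => rw [pow_succ, ← Matrix.vecMul_vecMul, ih, hs]

lemma pois_pow_summable (hP : IsStochastic P) {t : ℝ} (ht : 0 ≤ t) (i : ℕ) (x y : Ω) :
    Summable (fun k : ℕ => pois t k * (P ^ (k + i)) x y) := by
  refine Summable.of_nonneg_of_le (fun k => mul_nonneg (pois_nonneg ht k) ((stoch_pow hP _).1 x y))
    (fun k => ?_) (pois_hasSum t).summable
  exact mul_le_of_le_one_right (pois_nonneg ht k) (stoch_le_one (stoch_pow hP _) x y)

lemma hmat_hasSum (hP : IsStochastic P) {t : ℝ} (ht : 0 ≤ t) (x y : Ω) :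
    HasSum (fun k : ℕ => pois t k * (P ^ k) x y) (hmat P t x y) :=
  (pois_pow_summable hP ht 0 x y).hasSum

lemma hmat_stoch (hP : IsStochastic P) {t : ℝ} (ht : 0 ≤ t) : IsStochastic (hmat P t) := by
  refine ⟨fun x y => (hmat_hasSum hP ht x y).nonneg fun k =>
    mul_nonneg (pois_nonneg ht k) ((stoch_pow hP _).1 x y), fun x => ?_⟩
  have h := hasSum_sum (s := Finset.univ) fun y _ => hmat_hasSum hP ht x y
  simp only [← Finset.mul_sum, (stoch_pow hP _).2, mul_one] at h
  exact h.unique (pois_hasSum t)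

lemma hmat_mulVec_hasSum (hP : IsStochastic P) {t : ℝ} (ht : 0 ≤ t) (u : Ω → ℝ) (x : Ω) :
    HasSum (fun k : ℕ => pois t k * ((P ^ k) *ᵥ u) x) ((hmat P t *ᵥ u) x) := by
  have h := hasSum_sum (s := Finset.univ) fun y _ => (hmat_hasSum hP ht x y).mul_right (u y)
  refine hasSum_congr_mp (fun k => ?_) h
  simp only [Matrix.mulVec, dotProduct, Finset.mul_sum, mul_assoc]

lemma delta_vecMul (Q : Matrix Ω Ω ℝ) (x y : Ω) : (deltaMass x ᵥ* Q) y = Q x y := by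
  simp [Matrix.vecMul, dotProduct, deltaMass]

lemma contDist_eq (P : Matrix Ω Ω ℝ) (pi : Ω → ℝ) (t : ℝ) (x : Ω) :
    contDist P pi t (deltaMass x) = (∑ y, |hmat P t x y - pi y|) / 2 := by
  simp only [contDist, tvDist, delta_vecMul, hmat, pois]

lemma aveDist_eq (P : Matrix Ω Ω ℝ) (pi : Ω → ℝ) (m : ℕ) (x : Ω) :
    aveDist P pi m (deltaMass x)
      = (∑ y, |((P ^ m) x y + (P ^ (m + 1)) x y) / 2 - pi y|) / 2 := by
  simp only [aveDist, tvDist, delta_vecMul, Nat.floor_natCast]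

lemma cont_le_max (P : Matrix Ω Ω ℝ) (pi : Ω → ℝ) (t : ℝ) (x : Ω) :
    ∑ y, |hmat P t x y - pi y| ≤ 2 * contDistMax P pi t := by
  have : contDist P pi t (deltaMass x) ≤ contDistMax P pi t :=
    le_ciSup (f := fun x => contDist P pi t (deltaMass x)) (Set.finite_range _).bddAbove x
  rw [contDist_eq] at this
  linarith

lemma ave_le_max (P : Matrix Ω Ω ℝ) (pi : Ω → ℝ) (m : ℕ) (x : Ω) :
    ∑ y, |((P ^ m) x y + (P ^ (m + 1)) x y) / 2 - pi y| ≤ 2 * aveDistMax P pi m := by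
  have : aveDist P pi m (deltaMass x) ≤ aveDistMax P pi m :=
    le_ciSup (f := fun x => aveDist P pi m (deltaMass x)) (Set.finite_range _).bddAbove x
  rw [aveDist_eq] at this
  linarith

lemma contMax_le [Nonempty Ω] {t c : ℝ} (h : ∀ x, ∑ y, |hmat P t x y - pi y| ≤ 2 * c) :
    contDistMax P pi t ≤ c := by
  refine ciSup_le fun x => ?_
  rw [contDist_eq]
  linarith [h x]

lemma aveMax_le [Nonempty Ω] {m : ℕ} {c : ℝ}
    (h : ∀ x, ∑ y, |((P ^ m) x y + (P ^ (m + 1)) x y) / 2 - pi y| ≤ 2 * c) :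
    aveDistMax P pi m ≤ c := by
  refine ciSup_le fun x => ?_
  rw [aveDist_eq]
  linarith [h x]

lemma cont_diff [Nonempty Ω] (hP : IsStochastic P) {t b a : ℝ} (ht : 0 ≤ t) (hb : 0 ≤ b)
    (h : HasSum (fun k : ℕ => |pois t k - pois b k|) a) :
    contDistMax P pi t ≤ contDistMax P pi b + a / 2 := by
  refine contMax_le fun x => ?_
  have h1 : ∑ y, |hmat P t x y - hmat P b x y| ≤ a := by
    refine mix_l1 (v := fun k y => (pois t k - pois b k) * (P ^ k) x y) (fun y => ?_)
      (fun k => ?_) h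
    · refine hasSum_congr_mp (fun k => ?_) ((hmat_hasSum hP ht x y).sub (hmat_hasSum hP hb x y))
      ring
    · simp only [abs_mul, ← Finset.mul_sum, abs_of_nonneg ((stoch_pow hP k).1 x _),
        (stoch_pow hP k).2, mul_one, le_refl]
  have h2 : ∑ y, |hmat P t x y - pi y| ≤
      ∑ y, |hmat P t x y - hmat P b x y| + ∑ y, |hmat P b x y - pi y| := by
    rw [← Finset.sum_add_distrib]
    exact Finset.sum_le_sum fun y _ => abs_sub_le _ _ _
  linarith [cont_le_max P pi b x]

lemma ave_anti [Nonempty Ω] (h : IsMC P pi) : Antitone (fun m : ℕ => aveDistMax P pi m) := by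
  refine antitone_nat_of_succ_le fun m => aveMax_le fun x => ?_
  refine le_trans ?_ (ave_le_max P pi m x)
  refine le_trans (le_of_eq ?_)
    (stoch_contr h.1 (fun y => ((P ^ m) x y + (P ^ (m + 1)) x y) / 2 - pi y))
  refine Finset.sum_congr rfl fun y _ => ?_
  congr 1
  have e1 : ∀ k, (P ^ (k + 1)) x y = ∑ z, (P ^ k) x z * P z y := by
    intro k; rw [pow_succ, Matrix.mul_apply]
  have e2 : pi y = ∑ z, pi z * P z y := congrFun h.2.2.2.symm y
  simp only [Matrix.vecMul, dotProduct]
  rw [e1 (m + 1), e1 m, e2, ← Finset.sum_add_distrib, Finset.sum_div, ← Finset.sum_sub_distrib]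
  refine Finset.sum_congr rfl fun z _ => ?_
  ring

lemma prob_l1_le_two {μ ν : Ω → ℝ} (hμ : IsProbVec μ) (hν : IsProbVec ν) :
    ∑ y, |μ y - ν y| ≤ 2 := by
  have : ∑ y, |μ y - ν y| ≤ ∑ y, (μ y + ν y) := Finset.sum_le_sum fun y _ => by
    have := hμ.1 y; have := hν.1 y
    rw [abs_le]; constructor <;> linarith
  rw [Finset.sum_add_distrib, hμ.2, hν.2] at this
  linarith

lemma ave_prob (h : IsStochastic P) (k : ℕ) (x : Ω) :
    IsProbVec (fun y => ((P ^ k) x y + (P ^ (k + 1)) x y) / 2) := by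
  refine ⟨fun y => ?_, ?_⟩
  · have := (stoch_pow h k).1 x y; have := (stoch_pow h (k + 1)).1 x y
    simp only; linarith
  · simp only
    rw [← Finset.sum_div, Finset.sum_add_distrib, (stoch_pow h _).2, (stoch_pow h _).2]; norm_num

/-- Continuous distance controlled by averaged distance. -/
lemma cont_le_ave [Nonempty Ω] (h : IsMC P pi) {t : ℝ} (s : ℕ) (ht : (s : ℝ) < t) :
    contDistMax P pi t ≤ aveDistMax P pi s + 1 / Real.sqrt t + t / (t - s) ^ 2 := by
  have ht0 : 0 < t := lt_of_le_of_lt (Nat.cast_nonneg s) ht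
  refine contMax_le fun x => ?_
  set B : Ω → ℝ := fun y => ∑' k : ℕ, pois t k * (P ^ (k + 1)) x y with hB
  have hBs : ∀ y, HasSum (fun k : ℕ => pois t k * (P ^ (k + 1)) x y) (B y) := fun y =>
    (pois_pow_summable h.1 ht0.le 1 x y).hasSum
  have hH := fun y => hmat_hasSum h.1 ht0.le x y
  have hBs2 : ∀ y, HasSum (fun k : ℕ => (k : ℝ) * pois t k * (P ^ k) x y) (t * B y) := fun y =>
    pois_shift (g := fun k => (P ^ k) x y) (hBs y)
  obtain ⟨a, ha, ha1⟩ := pois_abs_one_sub ht0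
  have h1 : ∑ y, |hmat P t x y - B y| ≤ a := by
    refine mix_l1 (v := fun k y => (pois t k - (k : ℝ) * pois t k / t) * (P ^ k) x y) (fun y => ?_)
      (fun k => ?_) ha
    · have := (hH y).sub ((hBs2 y).mul_left (1 / t))
      rw [one_div, inv_mul_cancel_left₀ ht0.ne'] at this
      refine hasSum_congr_mp (fun k => ?_) this
      field_simp
    · simp only [abs_mul, ← Finset.mul_sum, abs_of_nonneg ((stoch_pow h.1 k).1 x _),
        (stoch_pow h.1 k).2, mul_one, le_refl]
  have hts : 0 < t - s := by linarith
  have h2 : ∑ y, |(hmat P t x y + B y) / 2 - pi y| ≤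
      2 * aveDistMax P pi s + 2 / (t - s) ^ 2 * t := by
    refine mix_l1 (v := fun k y => pois t k * (((P ^ k) x y + (P ^ (k + 1)) x y) / 2 - pi y))
      (c := fun k => 2 * aveDistMax P pi s * pois t k
        + 2 / (t - s) ^ 2 * (pois t k * ((k : ℝ) - t) ^ 2)) (fun y => ?_) (fun k => ?_) ?_
    · have := (((hH y).add (hBs y)).div_const 2).sub ((pois_hasSum t).mul_right (pi y))
      rw [one_mul] at this
      refine hasSum_congr_mp (fun k => ?_) this
      ring
    · simp only [abs_mul, ← Finset.mul_sum, abs_of_nonneg (pois_nonneg ht0.le k)]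
      have hp := pois_nonneg ht0.le k
      have key : ∑ y, |((P ^ k) x y + (P ^ (k + 1)) x y) / 2 - pi y| ≤
          2 * aveDistMax P pi s + 2 / (t - s) ^ 2 * ((k : ℝ) - t) ^ 2 := by
        rcases le_or_gt s k with hk | hk
        · have := ave_le_max P pi k x
          have h3 := ave_anti h hk
          simp only at h3
          have : 0 ≤ 2 / (t - s) ^ 2 * ((k : ℝ) - t) ^ 2 := by positivity
          linarith
        · have h3 := prob_l1_le_two (ave_prob h.1 k x) h.2.2.1
          have h4 : 0 ≤ aveDistMax P pi s := by
            have := ave_le_max P pi s x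
            have h5 : 0 ≤ ∑ y, |((P ^ s) x y + (P ^ (s + 1)) x y) / 2 - pi y| :=
              Finset.sum_nonneg fun _ _ => abs_nonneg _
            linarith
          have h5 : 2 ≤ 2 / (t - s) ^ 2 * ((k : ℝ) - t) ^ 2 := by
            rw [div_mul_eq_mul_div, le_div_iff₀ (by positivity)]
            have : (k : ℝ) ≤ s := by exact_mod_cast hk.le
            nlinarith
          linarith
      nlinarith [mul_le_mul_of_nonneg_left key hp]
    · have := ((pois_hasSum t).mul_left (2 * aveDistMax P pi s)).add
        ((pois_var t).mul_left (2 / (t - s) ^ 2))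
      rwa [mul_one] at this
  have h3 : ∑ y, |hmat P t x y - pi y| ≤
      (∑ y, |hmat P t x y - B y|) / 2 + ∑ y, |(hmat P t x y + B y) / 2 - pi y| := by
    rw [Finset.sum_div, ← Finset.sum_add_distrib]
    refine Finset.sum_le_sum fun y _ => ?_
    have := abs_add_le ((hmat P t x y - B y) / 2) ((hmat P t x y + B y) / 2 - pi y)
    rw [abs_div, abs_of_pos (by norm_num : (0 : ℝ) < 2)] at this
    refine le_trans (le_of_eq ?_) this
    congr 1; ring
  have h4 : 0 ≤ 1 / Real.sqrt t := by positivity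
  have e : 2 / (t - s) ^ 2 * t = 2 * (t / (t - s) ^ 2) := by ring
  linarith

end chain

section chain
variable {Ω : Type*} [Fintype Ω] [DecidableEq Ω] {P : Matrix Ω Ω ℝ} {pi : Ω → ℝ}

/-- Averaged distance controlled by continuous distance (reversible case). -/
lemma ave_le_cont [Nonempty Ω] (h : IsRevMC P pi) {t : ℝ} (ht : 0 ≤ t) (r s : ℕ) (hr : 0 < r) :
    aveDistMax P pi ((⌈t⌉₊ + r + s : ℕ) : ℝ) ≤
      2 * contDistMax P pi t + r / ((s : ℝ) + 1) + t / (r : ℝ) ^ 2 := by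
  refine aveMax_le fun x => ?_
  have hP := h.1.1
  have hpi := h.1.2.2.1
  have hr' : (0 : ℝ) < r := by exact_mod_cast hr
  set m := ⌈t⌉₊ + r + s with hm
  set D := contDistMax P pi t
  set f : Ω → ℝ := fun y => if 0 ≤ ((P ^ m) x y + (P ^ (m + 1)) x y) / 2 - pi y then 1 else -1
    with hf
  have hf1 : ∀ y, |f y| ≤ 1 := by
    intro y; simp only [hf]; split_ifs <;> norm_num
  set F : ℕ → Ω → ℝ := fun k => (2 : ℝ)⁻¹ • ((P ^ k) *ᵥ f + (P ^ (k + 1)) *ᵥ f) with hF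
  have hFx : ∀ k y, F k y = (((P ^ k) *ᵥ f) y + ((P ^ (k + 1)) *ᵥ f) y) / 2 := by
    intro k y; simp only [hF, Pi.smul_apply, Pi.add_apply, smul_eq_mul]; ring
  have hPF : ∀ j k, (P ^ j) *ᵥ F k = F (j + k) := by
    intro j k
    simp only [hF]
    rw [Matrix.mulVec_smul, Matrix.mulVec_add, Matrix.mulVec_mulVec, Matrix.mulVec_mulVec,
      ← pow_add, ← pow_add, add_assoc]
  have hF1 : ∀ k y, |F k y| ≤ 1 := by
    intro k y
    rw [hFx]
    have h1 := abs_le.1 (stoch_mulVec_abs (stoch_pow hP k) hf1 y)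
    have h2 := abs_le.1 (stoch_mulVec_abs (stoch_pow hP (k + 1)) hf1 y)
    rw [abs_le]; constructor <;> linarith [h1.1, h1.2, h2.1, h2.2]
  have hpiF : ∀ k, ∑ y, pi y * F k y = ∑ y, pi y * f y := by
    intro k
    have h1 := stat_sum_pow h.1.2.2.2 f k
    have h2 := stat_sum_pow h.1.2.2.2 f (k + 1)
    have : ∑ y, pi y * F k y =
        (∑ y, pi y * ((P ^ k) *ᵥ f) y + ∑ y, pi y * ((P ^ (k + 1)) *ᵥ f) y) / 2 := by
      rw [← Finset.sum_add_distrib, Finset.sum_div]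
      refine Finset.sum_congr rfl fun y _ => ?_
      rw [hFx]; ring
    rw [this, h1, h2]; ring
  -- the total variation as a linear functional
  have hmain : ∑ y, |((P ^ m) x y + (P ^ (m + 1)) x y) / 2 - pi y| = F m x - ∑ y, pi y * f y := by
    rw [hFx]
    simp only [Matrix.mulVec, dotProduct]
    rw [← Finset.sum_add_distrib, Finset.sum_div, ← Finset.sum_sub_distrib]
    refine Finset.sum_congr rfl fun y _ => ?_
    simp only [hf]
    split_ifs with h0
    · rw [abs_of_nonneg h0]; ring
    · rw [abs_of_neg (not_le.1 h0)]; ring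
  set G : Ω → ℝ := fun y => ∑ i ∈ Finset.range (2 * r), |F (s + i + 1) y - F (s + i) y| with hG
  set g : Ω → ℝ := fun y => min (G y) 2 with hg
  have hG0 : ∀ y, 0 ≤ G y := fun y => Finset.sum_nonneg fun _ _ => abs_nonneg _
  have hg0 : ∀ y, 0 ≤ g y := fun y => le_min (hG0 y) (by norm_num)
  have hg2 : ∀ y, g y ≤ 2 := fun y => min_le_right _ _
  have hosc : ∀ n, n ≤ 2 * r → ∀ y, |F (s + n) y - F s y| ≤ g y := by
    intro n hn y
    refine le_min ?_ ?_
    · have e : F (s + n) y - F s y = ∑ i ∈ Finset.range n, (F (s + i + 1) y - F (s + i) y) := by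
        have := Finset.sum_range_sub (fun i => F (s + i) y) n
        simpa [add_assoc] using this.symm
      rw [e]
      refine (Finset.abs_sum_le_sum_abs _ _).trans ?_
      exact Finset.sum_le_sum_of_subset_of_nonneg (Finset.range_mono hn) fun _ _ _ => abs_nonneg _
    · have h1 := abs_le.1 (hF1 (s + n) y)
      have h2 := abs_le.1 (hF1 s y)
      rw [abs_le]; constructor <;> linarith [h1.1, h1.2, h2.1, h2.2]
  have hpig : ∑ y, pi y * g y ≤ 2 * (r / ((s : ℝ) + 1)) := by
    calc ∑ y, pi y * g y ≤ ∑ y, pi y * G y := Finset.sum_le_sum fun y _ =>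
          mul_le_mul_of_nonneg_left (min_le_left _ _) (hpi.1 y)
      _ = ∑ i ∈ Finset.range (2 * r), ∑ y, pi y * |F (s + i + 1) y - F (s + i) y| := by
          simp only [hG, Finset.mul_sum]
          rw [Finset.sum_comm]
      _ ≤ ∑ i ∈ Finset.range (2 * r), 1 / ((s : ℝ) + 1) := by
          refine Finset.sum_le_sum fun i _ => ?_
          have h1 := decay_l1 h f hf1 (s + i)
          have e : ∑ y, pi y * |F (s + i + 1) y - F (s + i) y| =
            (∑ y, pi y * |((P ^ (s + i)) *ᵥ f) y - ((P ^ (s + i + 2)) *ᵥ f) y|) / 2 := by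
            rw [Finset.sum_div]
            refine Finset.sum_congr rfl fun y _ => ?_
            rw [hFx, hFx, mul_div_assoc]
            congr 1
            rw [abs_sub_comm, ← abs_of_pos (by norm_num : (0 : ℝ) < 2), ← abs_div,
              abs_of_pos (by norm_num : (0 : ℝ) < 2)]
            congr 1
            ring
          rw [e]
          have h2 : (2 : ℝ) / (((s + i : ℕ) : ℝ) + 1) ≤ 2 / ((s : ℝ) + 1) := by
            gcongr; simp
          have h3 : (2 : ℝ) / ((s : ℝ) + 1) = 2 * (1 / ((s : ℝ) + 1)) := by ring
          linarith
      _ = 2 * (r / ((s : ℝ) + 1)) := by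
          rw [Finset.sum_const, Finset.card_range, nsmul_eq_mul]; push_cast; ring
  have hDx := cont_le_max P pi t x
  have hHF : |(hmat P t *ᵥ F s) x - ∑ y, pi y * f y| ≤ 2 * D := by
    rw [← hpiF s]
    refine le_trans ?_ hDx
    simp only [Matrix.mulVec, dotProduct]
    rw [← Finset.sum_sub_distrib]
    refine (Finset.abs_sum_le_sum_abs _ _).trans (Finset.sum_le_sum fun y _ => ?_)
    rw [← sub_mul, abs_mul]
    exact mul_le_of_le_one_right (abs_nonneg _) (hF1 s y)
  have hHg : (hmat P t *ᵥ g) x ≤ ∑ y, pi y * g y + 2 * D := by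
    have e : (hmat P t *ᵥ g) x - ∑ y, pi y * g y = ∑ y, (hmat P t x y - pi y) * (g y - 1) := by
      simp only [Matrix.mulVec, dotProduct, mul_sub, sub_mul, Finset.sum_sub_distrib, mul_one,
        (hmat_stoch hP ht).2, hpi.2]
      ring
    have : ∑ y, (hmat P t x y - pi y) * (g y - 1) ≤ ∑ y, |hmat P t x y - pi y| := by
      refine Finset.sum_le_sum fun y _ => ?_
      refine (le_abs_self _).trans ?_
      rw [abs_mul]
      refine mul_le_of_le_one_right (abs_nonneg _) ?_
      rw [abs_le]; constructor <;> linarith [hg0 y, hg2 y]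
    linarith
  have hdiff : F m x ≤ (hmat P t *ᵥ F s) x + (hmat P t *ᵥ g) x + 2 / (r : ℝ) ^ 2 * t := by
    have h1 := (pois_hasSum t).mul_right (F m x)
    rw [one_mul] at h1
    have h2 := ((hmat_mulVec_hasSum hP ht (F s) x).add (hmat_mulVec_hasSum hP ht g x)).add
      ((pois_var t).mul_left (2 / (r : ℝ) ^ 2))
    refine hasSum_le (fun j => ?_) h1 h2
    have hp := pois_nonneg ht j
    have key : F m x ≤ ((P ^ j) *ᵥ F s) x + ((P ^ j) *ᵥ g) x
        + 2 / (r : ℝ) ^ 2 * ((j : ℝ) - t) ^ 2 := by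
      have hgn : 0 ≤ ((P ^ j) *ᵥ g) x := Finset.sum_nonneg fun y _ =>
        mul_nonneg ((stoch_pow hP j).1 x y) (hg0 y)
      by_cases hj : j ≤ ⌈t⌉₊ + r ∧ ⌈t⌉₊ ≤ j + r
      · obtain ⟨n, hn, hn2⟩ : ∃ n, m = j + (s + n) ∧ n ≤ 2 * r :=
          ⟨⌈t⌉₊ + r - j, by omega, by omega⟩
        have h3 : F m x - ((P ^ j) *ᵥ F s) x ≤ ((P ^ j) *ᵥ g) x := by
          rw [hn, ← hPF]
          simp only [Matrix.mulVec, dotProduct]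
          rw [← Finset.sum_sub_distrib]
          refine Finset.sum_le_sum fun y _ => ?_
          rw [← mul_sub]
          exact mul_le_mul_of_nonneg_left ((le_abs_self _).trans (hosc n hn2 y))
            ((stoch_pow hP j).1 x y)
        have : 0 ≤ 2 / (r : ℝ) ^ 2 * ((j : ℝ) - t) ^ 2 := by positivity
        linarith
      · have h3 : (r : ℝ) ≤ |(j : ℝ) - t| := by
          rw [not_and_or, not_le, not_le] at hj
          rcases hj with hj | hj
          · have h4 : ((⌈t⌉₊ + r : ℕ) : ℝ) ≤ j := by exact_mod_cast hj.le
            push_cast at h4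
            have := Nat.le_ceil t
            exact le_trans (by linarith) (le_abs_self _)
          · have h4 : ((j + r + 1 : ℕ) : ℝ) ≤ ⌈t⌉₊ := by exact_mod_cast hj
            push_cast at h4
            have := Nat.ceil_lt_add_one ht
            exact le_trans (by linarith) (neg_le_abs _)
        have h4 : (r : ℝ) ^ 2 ≤ ((j : ℝ) - t) ^ 2 := by
          rw [← sq_abs ((j : ℝ) - t)]; gcongr
        have h5 : 2 ≤ 2 / (r : ℝ) ^ 2 * ((j : ℝ) - t) ^ 2 := by
          rw [div_mul_eq_mul_div, le_div_iff₀ (by positivity)]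
          linarith
        have h6 := (abs_le.1 (hF1 m x)).2
        have h7 := (abs_le.1 (hF1 (j + s) x)).1
        rw [hPF]
        linarith
    nlinarith [mul_le_mul_of_nonneg_left key hp]
  rw [hmain]
  have := (abs_le.1 hHF).2
  have e : 2 / (r : ℝ) ^ 2 * t = 2 * (t / (r : ℝ) ^ 2) := by ring
  linarith

lemma hmat_eq_exp (P : Matrix Ω Ω ℝ) (t : ℝ) :
    hmat P t = Real.exp (-t) • NormedSpace.exp (t • P) := by
  open scoped Matrix.Norms.Operator in
  have h := NormedSpace.exp_series_hasSum_exp' (𝕂 := ℝ) (t • P)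
  ext x y
  have h2 : HasSum (fun n : ℕ => (((Nat.factorial n : ℝ)⁻¹) • (t • P) ^ n) x y)
      ((NormedSpace.exp (t • P)) x y) := by
    have := Pi.hasSum.1 (Pi.hasSum.1 h x) y
    exact this
  have h3 := h2.mul_left (Real.exp (-t))
  rw [Matrix.smul_apply, smul_eq_mul, ← h3.tsum_eq, hmat]
  congr 1
  ext k
  rw [smul_pow, Matrix.smul_apply, Matrix.smul_apply, pois]
  simp only [smul_eq_mul]
  field_simp

lemma hmat_add (P : Matrix Ω Ω ℝ) (t u : ℝ) : hmat P (t + u) = hmat P t * hmat P u := by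
  rw [hmat_eq_exp, hmat_eq_exp, hmat_eq_exp, add_smul, Matrix.exp_add_of_commute]
  · rw [neg_add, Real.exp_add, Matrix.smul_mul, Matrix.mul_smul, smul_smul]
  · exact ((Commute.refl P).smul_left t).smul_right u

lemma hmat_stat (h : IsMC P pi) {t : ℝ} (ht : 0 ≤ t) : pi ᵥ* hmat P t = pi := by
  ext y
  have h1 := hasSum_sum (s := Finset.univ) fun x _ => (hmat_hasSum h.1 ht x y).mul_left (pi x)
  have h2 := (pois_hasSum t).mul_right (pi y)
  rw [one_mul] at h2
  refine HasSum.unique h1 (hasSum_congr_mp (fun k => ?_) h2)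
  have := congrFun (stat_pow h.2.2.2 k) y
  simp only [Matrix.vecMul, dotProduct] at this
  conv_lhs => rw [← this]
  rw [Finset.mul_sum]
  refine Finset.sum_congr rfl fun x _ => ?_
  ring

lemma cont_conv [Nonempty Ω] (h : IsMC P pi) {ε : ℝ} (hε : 0 < ε) :
    ∃ t : ℝ, 0 ≤ t ∧ contDistMax P pi t ≤ ε := by
  have hpos : ∀ z : Ω × Ω, 0 < hmat P 1 z.1 z.2 := by
    rintro ⟨x, y⟩
    obtain ⟨k, hk⟩ := h.2.1 x y
    have h1 := hmat_hasSum h.1 zero_le_one x y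
    refine lt_of_lt_of_le ?_ (le_hasSum h1 k fun j _ =>
      mul_nonneg (pois_nonneg zero_le_one j) ((stoch_pow h.1 _).1 x y))
    refine mul_pos ?_ hk
    unfold pois; positivity
  obtain ⟨z, hz⟩ := Finite.exists_min (fun z : Ω × Ω => hmat P 1 z.1 z.2)
  set η := hmat P 1 z.1 z.2 with hη
  have hη0 : 0 < η := hpos z
  have hη1 : η ≤ 1 := stoch_le_one (hmat_stoch h.1 zero_le_one) _ _
  have hpi1 : ∀ y, pi y ≤ 1 := fun y => by
    rw [← h.2.2.1.2]
    exact Finset.single_le_sum (f := pi) (fun y _ => h.2.2.1.1 y) (Finset.mem_univ y)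
  have hst : IsStochastic (hmat P 1) := hmat_stoch h.1 zero_le_one
  have hcontr : ∀ v : Ω → ℝ, ∑ x, v x = 0 →
      ∑ y, |(v ᵥ* hmat P 1) y| ≤ (1 - η) * ∑ x, |v x| := by
    intro v hv
    calc ∑ y, |(v ᵥ* hmat P 1) y| ≤ ∑ y, ∑ x, |v x| * (hmat P 1 x y - η * pi y) := by
          refine Finset.sum_le_sum fun y _ => ?_
          have e : (v ᵥ* hmat P 1) y = ∑ x, v x * (hmat P 1 x y - η * pi y) := by
            simp only [mul_sub, Finset.sum_sub_distrib, ← Finset.sum_mul, hv, zero_mul, sub_zero]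
            rfl
          rw [e]
          refine (Finset.abs_sum_le_sum_abs _ _).trans (Finset.sum_le_sum fun x _ => ?_)
          have h0 : 0 ≤ hmat P 1 x y - η * pi y := by
            have h1 : η ≤ hmat P 1 x y := hz (x, y)
            nlinarith [hpi1 y]
          rw [abs_mul, abs_of_nonneg h0]
      _ = (1 - η) * ∑ x, |v x| := by
          rw [Finset.sum_comm]
          simp only [← Finset.mul_sum, Finset.sum_sub_distrib, hst.2, h.2.2.1.2, mul_one]
          rw [← Finset.sum_mul, mul_comm]
  have hn : ∀ n : ℕ, ∀ x, ∑ y, |hmat P n x y - pi y| ≤ (1 - η) ^ n * 2 := by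
    intro n x
    have hs0 := hmat_stoch h.1 (Nat.cast_nonneg (α := ℝ) n)
    induction n with
    | zero =>
      rw [pow_zero, one_mul]
      exact prob_l1_le_two ⟨fun y => hs0.1 x y, hs0.2 x⟩ h.2.2.1
    | succ n ih =>
      have hs := hmat_stoch h.1 (Nat.cast_nonneg (α := ℝ) n)
      have h1 := hcontr (fun y => hmat P n x y - pi y) (by
        rw [Finset.sum_sub_distrib, hs.2, h.2.2.1.2, sub_self])
      have e : ∀ y, ((fun y => hmat P n x y - pi y) ᵥ* hmat P 1) y =
          hmat P ((n + 1 : ℕ) : ℝ) x y - pi y := by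
        intro y
        push_cast
        rw [hmat_add, Matrix.mul_apply]
        conv_rhs => rw [← hmat_stat h (zero_le_one (α := ℝ))]
        simp only [Matrix.vecMul, dotProduct, sub_mul, Finset.sum_sub_distrib]
      simp only [e] at h1
      refine h1.trans ?_
      rw [pow_succ', mul_assoc]
      exact mul_le_mul_of_nonneg_left (ih hs) (by linarith)
  obtain ⟨n, hn2⟩ := exists_pow_lt_of_lt_one hε (by linarith : 1 - η < 1)
  refine ⟨n, Nat.cast_nonneg n, contMax_le fun x => ?_⟩
  have := hn n x
  linarith

end chain

/-! ### Mixing times -/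

section chain
variable {Ω : Type*} [Fintype Ω] [DecidableEq Ω] {P : Matrix Ω Ω ℝ} {pi : Ω → ℝ}

lemma contMix_nonneg (P : Matrix Ω Ω ℝ) (pi : Ω → ℝ) (ε : ℝ) : 0 ≤ contMix P pi ε :=
  Real.sInf_nonneg fun _ ht => ht.1

lemma contSet_bdd (P : Matrix Ω Ω ℝ) (pi : Ω → ℝ) (ε : ℝ) :
    BddBelow {t : ℝ | 0 ≤ t ∧ contDistMax P pi t ≤ ε} := ⟨0, fun _ ht => ht.1⟩

lemma contMix_le {ε t : ℝ} (ht : 0 ≤ t) (h : contDistMax P pi t ≤ ε) : contMix P pi ε ≤ t :=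
  csInf_le (contSet_bdd P pi ε) ⟨ht, h⟩

lemma cont_lip [Nonempty Ω] (h : IsMC P pi) {t b : ℝ} (ht : 0 ≤ t) (hb : t ≤ b) :
    contDistMax P pi t ≤ contDistMax P pi b + (b - t) := by
  obtain ⟨a, ha, ha2⟩ := pois_lip ht hb
  have := cont_diff (pi := pi) h.1 ht (ht.trans hb) ha
  linarith

lemma contMix_spec [Nonempty Ω] (h : IsMC P pi) {ε : ℝ} (hε : 0 < ε) :
    contDistMax P pi (contMix P pi ε) ≤ ε := by
  refine le_of_forall_pos_le_add fun η hη => ?_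
  obtain ⟨b, hb, hb2⟩ := exists_lt_of_csInf_lt (s := {t : ℝ | 0 ≤ t ∧ contDistMax P pi t ≤ ε})
    (cont_conv h hε) (lt_add_of_pos_right (contMix P pi ε) hη)
  have h1 := contMix_le hb.1 hb.2
  have := cont_lip h (contMix_nonneg P pi ε) h1
  linarith [hb.2]

lemma contMix_spec' [Nonempty Ω] (h : IsMC P pi) {ε : ℝ} (h0 : 0 < contMix P pi ε) :
    ε ≤ contDistMax P pi (contMix P pi ε) := by
  refine le_of_forall_pos_le_add fun η hη => ?_
  set a := contMix P pi ε
  have hs : max 0 (a - η) < a := max_lt h0 (by linarith)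
  have h1 : ε ≤ contDistMax P pi (max 0 (a - η)) := by
    by_contra! hc
    exact absurd (contMix_le (le_max_left _ _) hc.le) (not_le.2 hs)
  have := cont_lip h (le_max_left 0 (a - η)) hs.le
  linarith [le_max_right 0 (a - η)]

lemma contMix_anti [Nonempty Ω] (h : IsMC P pi) {ε δ : ℝ} (hε : 0 < ε) (hd : ε ≤ δ) :
    contMix P pi δ ≤ contMix P pi ε :=
  contMix_le (contMix_nonneg _ _ _) ((contMix_spec h hε).trans hd)

lemma hmat_zero (hP : IsStochastic P) (x y : Ω) : hmat P 0 x y = (1 : Matrix Ω Ω ℝ) x y := by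
  refine (hmat_hasSum hP le_rfl x y).unique ?_
  have := hasSum_single (f := fun k : ℕ => pois 0 k * (P ^ k) x y) 0 (fun k hk => by
    simp [pois, hk])
  simpa [pois] using this

lemma cont_zero [Nontrivial Ω] (h : IsMC P pi) : 1 / 2 ≤ contDistMax P pi 0 := by
  obtain ⟨x₀, y₀, hxy⟩ := exists_pair_ne Ω
  obtain ⟨x, hx⟩ : ∃ x, pi x ≤ 1 / 2 := by
    by_contra! hc
    have h1 : pi x₀ + pi y₀ ≤ ∑ z, pi z := by
      rw [← Finset.sum_pair hxy]
      exact Finset.sum_le_sum_of_subset_of_nonneg (Finset.subset_univ _)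
        fun z _ _ => h.2.2.1.1 z
    rw [h.2.2.1.2] at h1
    linarith [hc x₀, hc y₀]
  have h1 := cont_le_max P pi 0 x
  have h2 : 2 * (hmat P 0 x x - pi x) ≤ ∑ y, |hmat P 0 x y - pi y| := by
    have hs := hmat_stoch h.1 (le_refl (0 : ℝ))
    have h3 : ∑ y, (hmat P 0 x y - pi y) = 0 := by
      rw [Finset.sum_sub_distrib, hs.2, h.2.2.1.2, sub_self]
    rw [← Finset.add_sum_erase _ _ (Finset.mem_univ x)] at h3 ⊢
    have h4 := Finset.abs_sum_le_sum_abs (fun y => hmat P 0 x y - pi y) (Finset.univ.erase x)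
    have h5 := neg_le_abs (∑ y ∈ Finset.univ.erase x, (hmat P 0 x y - pi y))
    have h6 := le_abs_self (hmat P 0 x x - pi x)
    linarith
  rw [hmat_zero h.1, Matrix.one_apply_eq] at h2
  linarith

lemma window_lower [Nontrivial Ω] (h : IsMC P pi) :
    1 / 4 ≤ contMix P pi (1 / 4) - contMix P pi (3 / 4) ∧
    Real.sqrt (contMix P pi (3 / 4)) ≤ 2 * (contMix P pi (1 / 4) - contMix P pi (3 / 4)) := by
  have hab := contMix_anti h (ε := 1 / 4) (δ := 3 / 4) (by norm_num) (by norm_num)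
  have hb := contMix_spec h (ε := 1 / 4) (by norm_num)
  have ha0 := contMix_nonneg P pi (3 / 4)
  have ha := contMix_spec' h (ε := 3 / 4)
  set a := contMix P pi (3 / 4)
  set b := contMix P pi (1 / 4)
  have hz := cont_zero h
  constructor
  · have := cont_lip h ha0 hab
    rcases ha0.eq_or_lt with h0 | h0
    · rw [← h0] at this
      rw [← h0]
      linarith
    · linarith [ha h0]
  · rcases ha0.eq_or_lt with h0 | h0
    · rw [← h0, Real.sqrt_zero]; linarith
    · by_contra! hc
      have hsq : Real.sqrt a * Real.sqrt a = a := Real.mul_self_sqrt ha0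
      obtain ⟨s, hs, hs1⟩ := pois_chi h0 hab (by nlinarith)
      have := cont_diff (pi := pi) h.1 ha0 (ha0.trans hab) hs
      linarith [ha h0]

lemma ave_nonneg [Nonempty Ω] (P : Matrix Ω Ω ℝ) (pi : Ω → ℝ) (m : ℕ) : 0 ≤ aveDistMax P pi m := by
  have := ave_le_max P pi m (Classical.arbitrary Ω)
  have h5 := Finset.sum_nonneg (s := Finset.univ) (fun y _ => abs_nonneg
    (((P ^ m) (Classical.arbitrary Ω) y + (P ^ (m + 1)) (Classical.arbitrary Ω) y) / 2 - pi y))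
  linarith

lemma aveMix_le {ε : ℝ} {m : ℕ} (h : aveDistMax P pi m ≤ ε) : aveMix P pi ε ≤ m :=
  Nat.sInf_le h

lemma sub_mix [Nonempty Ω] [Subsingleton Ω] (h : IsMC P pi) {ε : ℝ} (hε : 0 < ε) :
    contMix P pi ε = 0 ∧ aveMix P pi ε = 0 := by
  have key : ∀ μ : Ω → ℝ, ∑ y, μ y = 1 → ∑ y, |μ y - pi y| ≤ 2 * ε := by
    intro μ hμ
    have hpi := h.2.2.1.2
    have hz : ∀ y, μ y - pi y = 0 := by
      intro y
      have := Fintype.sum_subsingleton μ y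
      have := Fintype.sum_subsingleton pi y
      linarith
    simp only [hz, abs_zero, Finset.sum_const_zero]
    linarith
  refine ⟨le_antisymm (contMix_le le_rfl (contMax_le fun x => key _ ?_)) (contMix_nonneg _ _ _),
    Nat.le_zero.1 (aveMix_le (aveMax_le fun x => key _ (ave_prob h.1 0 x).2))⟩
  exact (hmat_stoch h.1 le_rfl).2 x

lemma upper_dist {ε : ℝ} (hε : 0 < ε) (hε1 : ε ≤ 1) : ∃ C : ℝ, 0 ≤ C ∧
    ∀ (Ω : Type) [Fintype Ω] [DecidableEq Ω] [Nonempty Ω] (P : Matrix Ω Ω ℝ) (pi : Ω → ℝ),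
      IsRevMC P pi → ∃ m : ℕ, aveDistMax P pi m ≤ ε ∧
        (m : ℝ) ≤ contMix P pi (ε / 8) + C * (Real.sqrt (contMix P pi (ε / 8)) + 1) := by
  obtain ⟨K, hK⟩ := exists_nat_ge (4 / ε)
  have hK1 : (1 : ℝ) ≤ K := le_trans (by rw [le_div_iff₀ hε]; linarith) hK
  have hK0 : 0 < K := by
    have : (0 : ℝ) < K := by linarith
    exact_mod_cast this
  have hKε : 1 / (K : ℝ) ≤ ε / 4 := by
    rw [div_le_iff₀ hε] at hK
    rw [div_le_iff₀ (by linarith)]; linarith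
  refine ⟨1 + 2 * (K * (1 + K)), by positivity, ?_⟩
  intro Ω _ _ _ P pi h
  set t := contMix P pi (ε / 8) with htd
  have ht : 0 ≤ t := contMix_nonneg _ _ _
  have hd : contDistMax P pi t ≤ ε / 8 := contMix_spec h.1 (by linarith)
  have hsq : Real.sqrt t * Real.sqrt t = t := Real.mul_self_sqrt ht
  have hs0 := Real.sqrt_nonneg t
  set q := ⌈Real.sqrt t⌉₊ with hq
  have hq1 : Real.sqrt t ≤ q := Nat.le_ceil _
  have hq2 : (q : ℝ) < Real.sqrt t + 1 := Nat.ceil_lt_add_one hs0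
  have hc2 : (⌈t⌉₊ : ℝ) < t + 1 := Nat.ceil_lt_add_one ht
  set r := K * (q + 1) with hr
  have hr0 : 0 < r := by positivity
  have hr' : (0 : ℝ) < r := by exact_mod_cast hr0
  have hrr : (r : ℝ) = K * (q + 1) := by rw [hr]; push_cast; ring
  refine ⟨⌈t⌉₊ + r + K * r, ?_, ?_⟩
  · refine (ave_le_cont h ht r (K * r) hr0).trans ?_
    have h1 : (r : ℝ) / (((K * r : ℕ) : ℝ) + 1) ≤ 1 / K := by
      rw [div_le_div_iff₀ (by positivity) (by linarith)]
      push_cast; nlinarith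
    have h2 : t / (r : ℝ) ^ 2 ≤ 1 / K := by
      rw [div_le_div_iff₀ (by positivity) (by linarith), hrr]
      have h3 : t ≤ (q + 1 : ℝ) ^ 2 := by nlinarith
      have h4 : (K : ℝ) ≤ K ^ 2 := by nlinarith
      calc t * K ≤ (q + 1 : ℝ) ^ 2 * K ^ 2 := by gcongr
        _ = _ := by ring
    linarith
  · push_cast
    rw [hrr]
    have : (K : ℝ) * (1 + K) * (q + 1) ≤ K * (1 + K) * (2 * (Real.sqrt t + 1)) := by
      gcongr; linarith
    nlinarith

lemma lower_mix {ε : ℝ} (hε : 0 < ε) (hε1 : ε < 1) : ∃ C : ℝ, 0 ≤ C ∧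
    ∀ (Ω : Type) [Fintype Ω] [DecidableEq Ω] [Nonempty Ω] (P : Matrix Ω Ω ℝ) (pi : Ω → ℝ) (s : ℕ),
      IsRevMC P pi → aveDistMax P pi s ≤ 1 - ε →
        contMix P pi (1 - ε / 2) ≤ s + C * (Real.sqrt s + 1) := by
  set K : ℝ := 32 / ε ^ 2 with hK
  have hε2 : ε ^ 2 ≤ ε := by nlinarith
  have hK1 : 1 ≤ K := by rw [hK, le_div_iff₀ (by positivity)]; nlinarith
  have hKε : K * ε ^ 2 = 32 := by rw [hK]; field_simp
  refine ⟨K, by linarith, ?_⟩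
  intro Ω _ _ _ P pi s h hs
  have hs0 := Real.sqrt_nonneg (s : ℝ)
  have hsq : Real.sqrt s * Real.sqrt s = s := Real.mul_self_sqrt (Nat.cast_nonneg s)
  set q := Real.sqrt s
  have hsn : (0 : ℝ) ≤ s := Nat.cast_nonneg s
  have hst : (s : ℝ) < s + K * (q + 1) := by
    have : 0 < K * (q + 1) := by positivity
    linarith
  refine contMix_le (by linarith) ?_
  refine (cont_le_ave h.1 s hst).trans ?_
  set t := (s : ℝ) + K * (q + 1) with ht
  have e : t - s = K * (q + 1) := by rw [ht]; ring
  rw [e]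
  have ht0 : 0 < t := by linarith
  have h1 : 1 / Real.sqrt t ≤ ε / 4 := by
    have : 4 / ε ≤ Real.sqrt t := by
      apply Real.le_sqrt_of_sq_le
      rw [div_pow, div_le_iff₀ (by positivity)]
      have : K ≤ t := by nlinarith
      nlinarith [mul_le_mul_of_nonneg_right this (sq_nonneg ε)]
    rw [div_le_iff₀ hε] at this
    rw [div_le_iff₀ (Real.sqrt_pos.2 ht0)]
    nlinarith
  have h2 : t / (K * (q + 1)) ^ 2 ≤ ε / 4 := by
    rw [div_le_iff₀ (by positivity)]
    have h3 : t ≤ 2 * K * (q + 1) ^ 2 := by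
      have : (s : ℝ) ≤ K * (q + 1) ^ 2 := by nlinarith
      nlinarith
    have h4 : 8 ≤ ε * K := by nlinarith
    have h5 : 0 ≤ K * (q + 1) ^ 2 := by positivity
    calc t ≤ 2 * K * (q + 1) ^ 2 := h3
      _ = 8 / 4 * (K * (q + 1) ^ 2) := by ring
      _ ≤ ε * K / 4 * (K * (q + 1) ^ 2) := by gcongr
      _ = _ := by ring
  linarith

end chain

lemma sqrt_le_add_one' (z : ℝ) (hz : 0 ≤ z) : Real.sqrt z ≤ z + 1 := by
  rw [Real.sqrt_le_left (by linarith)]; nlinarith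

lemma sqrt_sub_add {a b : ℝ} (ha : 0 ≤ a) (hb : 0 ≤ b) :
    Real.sqrt (a + b) ≤ Real.sqrt a + (b + 1) := by
  have h1 := Real.mul_self_sqrt ha
  have h2 := Real.sqrt_nonneg a
  rw [Real.sqrt_le_left (by linarith)]
  nlinarith

lemma key_chain {ε C1 C2 : ℝ} (hε : 0 < ε) (hε1 : ε ≤ 1 / 4) (hC1 : 0 < C1) (hC2 : 0 < C2) :
    ∃ K : ℝ, 0 < K ∧ ∀ (Ω : Type) [Fintype Ω] [DecidableEq Ω] [Nonempty Ω]
      (P : Matrix Ω Ω ℝ) (pi : Ω → ℝ) (w : ℝ), IsRevMC P pi →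
      contMix P pi (1 / 4) - contMix P pi (1 - 1 / 4) ≤ C1 * w →
      contMix P pi (ε / 8) - contMix P pi (1 - ε / 8) ≤ C2 * w →
      ∀ δ, ε ≤ δ → δ ≤ 1 - ε → |(aveMix P pi δ : ℝ) - contMix P pi (1 / 4)| ≤ K * w := by
  obtain ⟨C3, hC3, hU⟩ := upper_dist hε (by linarith)
  obtain ⟨C4, hC4, hL⟩ := lower_mix hε (by linarith)
  set K1 := 6 * C1 + C2 with hK1
  set KU := C2 + C3 * (K1 + 4 * C1) with hKU
  set KL := C2 + C4 * (K1 + KU + 2 * (4 * C1)) with hKL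
  refine ⟨KU + KL, by positivity, ?_⟩
  intro Ω _ _ _ P pi w h hw1 hw2 δ hδ hδ1
  rw [show (1 : ℝ) - 1 / 4 = 3 / 4 by norm_num] at hw1
  rcases subsingleton_or_nontrivial Ω with hsub | hnt
  · rw [(sub_mix h.1 (by linarith : 0 < δ)).2, (sub_mix h.1 (by norm_num : (0 : ℝ) < 1 / 4)).1]
    rw [(sub_mix h.1 (by norm_num : (0 : ℝ) < 1 / 4)).1,
      (sub_mix h.1 (by norm_num : (0 : ℝ) < 3 / 4)).1] at hw1
    have hw : 0 ≤ w := by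
      by_contra! hc
      nlinarith
    have : 0 ≤ (KU + KL) * w := by positivity
    simpa using this
  obtain ⟨hwa, hwb⟩ := window_lower h.1
  have o1 : contMix P pi (1 - ε / 8) ≤ contMix P pi (3 / 4) :=
    contMix_anti h.1 (by norm_num) (by linarith)
  have o2 : contMix P pi (3 / 4) ≤ contMix P pi (1 / 4) :=
    contMix_anti h.1 (by norm_num) (by norm_num)
  have o3 : contMix P pi (1 / 4) ≤ contMix P pi (ε / 8) :=
    contMix_anti h.1 (by linarith) (by linarith)
  have o4 : contMix P pi (1 - ε / 8) ≤ contMix P pi (1 - ε / 2) :=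
    contMix_anti h.1 (by linarith) (by linarith)
  have ha0 := contMix_nonneg P pi (3 / 4)
  obtain ⟨m, hm, hm2⟩ := hU Ω P pi h
  have hS : ∀ e, ε ≤ e → aveDistMax P pi (aveMix P pi e) ≤ e := fun e he =>
    Nat.sInf_mem (s := {t : ℕ | aveDistMax P pi t ≤ e}) ⟨m, hm.trans he⟩
  have hup : (aveMix P pi δ : ℝ) ≤ m := by
    exact_mod_cast aveMix_le (hm.trans hδ)
  have hTT : (aveMix P pi (1 - ε) : ℝ) ≤ aveMix P pi δ := by
    exact_mod_cast aveMix_le ((hS δ hδ).trans hδ1)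
  have hlow := hL Ω P pi (aveMix P pi (1 - ε)) h (hS (1 - ε) (by linarith))
  set T : ℝ := (aveMix P pi (1 - ε) : ℝ) with hT
  set A : ℝ := (aveMix P pi δ : ℝ) with hA
  set a := contMix P pi (3 / 4)
  set c := contMix P pi (1 / 4)
  set u := contMix P pi (ε / 8)
  set l := contMix P pi (1 - ε / 8)
  have hw0 : 0 < w := by
    by_contra! hc
    nlinarith
  have hone : 1 ≤ 4 * C1 * w := by linarith
  have hC2w : 0 ≤ C2 * w := by positivity
  have hsqu : Real.sqrt u ≤ K1 * w := by
    have h1 : Real.sqrt u ≤ Real.sqrt (a + C2 * w) := Real.sqrt_le_sqrt (by linarith)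
    have h2 := sqrt_sub_add ha0 hC2w
    rw [hK1]; nlinarith
  have hmU : (m : ℝ) ≤ c + KU * w := by
    have h1 : C3 * (Real.sqrt u + 1) ≤ C3 * (K1 * w + 4 * C1 * w) := by gcongr
    have e : KU * w = C2 * w + C3 * (K1 * w + 4 * C1 * w) := by rw [hKU]; ring
    rw [e]; linarith
  have hKU0 : 0 ≤ KU := by positivity
  have hKL0 : 0 ≤ KL := by positivity
  have hKUw : 0 ≤ KU * w := by positivity
  have hKLw : 0 ≤ KL * w := by positivity
  have hc0 : 0 ≤ c := by linarith
  have hsqT : Real.sqrt T ≤ K1 * w + (KU * w + 4 * C1 * w) := by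
    have h1 : Real.sqrt T ≤ Real.sqrt (c + KU * w) := Real.sqrt_le_sqrt (by linarith)
    have h2 := sqrt_sub_add hc0 hKUw
    have h3 : Real.sqrt c ≤ Real.sqrt u := Real.sqrt_le_sqrt o3
    linarith
  have hTl : c - KL * w ≤ T := by
    have h1 : C4 * (Real.sqrt T + 1) ≤ C4 * (K1 * w + (KU * w + 4 * C1 * w) + 4 * C1 * w) := by
      gcongr
    have e : KL * w = C2 * w + C4 * (K1 * w + (KU * w + 4 * C1 * w) + 4 * C1 * w) := by
      rw [hKL]; ring
    rw [e]; linarith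
  rw [abs_le, add_mul]
  constructor <;> linarith

/-- **Theorem 3 (i) of Hermon–Peres.**
If a sequence of finite irreducible reversible Markov chains exhibits a continuous-time
cutoff with window `w`, then it exhibits an averaged cutoff with the same window `w`. -/
theorem aveCutoffWindow_of_contCutoffWindow :
    ∀ (Ω : ℕ → Type) [∀ n, Fintype (Ω n)] [∀ n, DecidableEq (Ω n)] [∀ n, Nonempty (Ω n)]
      (P : ∀ n, Matrix (Ω n) (Ω n) ℝ) (pi : ∀ n, Ω n → ℝ) (w : ℕ → ℝ),
      (∀ n, IsRevMC (P n) (pi n)) →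
      ContCutoffWindow P pi w → AveCutoffWindow P pi w := by
  intro Ω _ _ _ P pi w hrev hcw
  obtain ⟨hcut, hlit, hwin⟩ := hcw
  have key : ∀ δ : ℝ, 0 < δ → δ < 1 → ∃ K : ℝ, 0 < K ∧ ∀ n,
      |(aveMix (P n) (pi n) δ : ℝ) - contMix (P n) (pi n) (1 / 4)| ≤ K * w n := by
    intro δ hδ hδ1
    set ε := min (1 / 4) (min δ (1 - δ)) with hε
    have hε0 : 0 < ε := lt_min (by norm_num) (lt_min hδ (by linarith))
    have hε1 : ε ≤ 1 / 4 := min_le_left _ _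
    have hε2 : ε ≤ δ := (min_le_right _ _).trans (min_le_left _ _)
    have hε3 : ε ≤ 1 - δ := (min_le_right _ _).trans (min_le_right _ _)
    obtain ⟨C1, hC1, h1⟩ := hwin (1 / 4) (by norm_num) le_rfl
    obtain ⟨C2, hC2, h2⟩ := hwin (ε / 8) (by linarith) (by linarith)
    obtain ⟨K, hK, h⟩ := key_chain hε0 hε1 hC1 hC2
    exact ⟨K, hK, fun n => h (Ω n) (P n) (pi n) (w n) (hrev n) (h1 n) (h2 n) δ hε2 (by linarith)⟩
  have hequiv : ∀ δ : ℝ, 0 < δ → δ < 1 →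
      (fun n => (aveMix (P n) (pi n) δ : ℝ)) ~[atTop] (fun n => contMix (P n) (pi n) (1 / 4)) := by
    intro δ hδ hδ1
    obtain ⟨K, hK, h⟩ := key δ hδ hδ1
    have hO : ((fun n => (aveMix (P n) (pi n) δ : ℝ)) - (fun n => contMix (P n) (pi n) (1 / 4)))
        =O[atTop] w := by
      refine IsBigO.of_bound K (Eventually.of_forall fun n => ?_)
      rw [Real.norm_eq_abs, Real.norm_eq_abs]
      exact (h n).trans (mul_le_mul_of_nonneg_left (le_abs_self _) hK.le)
    exact hO.trans_isLittleO hlit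
  have hne : ∀ᶠ n in atTop, contMix (P n) (pi n) (1 / 4) ≠ 0 := by
    have h1 := hcut (1 / 4) (by norm_num) (by norm_num)
    filter_upwards [h1.eventually_ne one_ne_zero] with n hn h0
    rw [h0, zero_div] at hn
    exact hn rfl
  refine ⟨fun ε hε hε1 => ?_, ?_, fun ε hε hε1 => ?_⟩
  · have e1 := hequiv ε hε hε1
    have e2 := hequiv (1 - ε) (by linarith) (by linarith)
    have e3 := e1.trans e2.symm
    refine (isEquivalent_iff_tendsto_one ?_).1 e3
    obtain ⟨φ, hφ, hφ2⟩ := e2.symm.exists_eq_mul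
    filter_upwards [hne, hφ2] with n hn h2 h0
    rw [h2, Pi.mul_apply, h0, mul_zero] at hn
    exact hn rfl
  · exact hlit.trans_isBigO (hequiv (1 / 4) (by norm_num) (by norm_num)).isBigO_symm
  · obtain ⟨K1, hK1, h1⟩ := key ε hε (by linarith)
    obtain ⟨K2, hK2, h2⟩ := key (1 - ε) (by linarith) (by linarith)
    refine ⟨K1 + K2, by positivity, fun n => ?_⟩
    have a1 := (abs_le.1 (h1 n)).2
    have a2 := (abs_le.1 (h2 n)).1
    rw [add_mul]
    linarith
end

section
/- There exists an absolute constant C such that for every finite irreducible reversible Markov chain (Ω,P,π) and every function f : Ω → ℝ: E_π[ sup_{t ≥ 0} (t+1)² · |(P_L^{t+1} f − P_L^t f)(x)|² ] ≤ C · Var_π(f), where P_L = (I+P)/2 and the supremum is over integers t ≥ 0. -/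
open Matrix Filter Asymptotics

/-- Weighted inner product. -/
noncomputable def ipw {Ω : Type} [Fintype Ω] (p f g : Ω → ℝ) : ℝ := ∑ x, p x * (f x * g x)

section aux
variable {Ω : Type} [Fintype Ω] (p : Ω → ℝ)

lemma ipw_add_left (f g h : Ω → ℝ) : ipw p (f + g) h = ipw p f h + ipw p g h := by
  simp only [ipw, ← Finset.sum_add_distrib, Pi.add_apply]
  exact Finset.sum_congr rfl fun x _ => by ring

lemma ipw_sub_left (f g h : Ω → ℝ) : ipw p (f - g) h = ipw p f h - ipw p g h := by
  simp only [ipw, ← Finset.sum_sub_distrib, Pi.sub_apply]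
  exact Finset.sum_congr rfl fun x _ => by ring

lemma ipw_comm (f g : Ω → ℝ) : ipw p f g = ipw p g f := by
  simp only [ipw]
  exact Finset.sum_congr rfl fun x _ => by ring

lemma ipw_smul_left (a : ℝ) (f g : Ω → ℝ) : ipw p (a • f) g = a * ipw p f g := by
  simp only [ipw, Finset.mul_sum, Pi.smul_apply, smul_eq_mul]
  exact Finset.sum_congr rfl fun x _ => by ring

lemma ipw_add_right (f g h : Ω → ℝ) : ipw p h (f + g) = ipw p h f + ipw p h g := by
  rw [ipw_comm, ipw_add_left, ipw_comm p f, ipw_comm p g]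

lemma ipw_sub_right (f g h : Ω → ℝ) : ipw p h (f - g) = ipw p h f - ipw p h g := by
  rw [ipw_comm, ipw_sub_left, ipw_comm p f, ipw_comm p g]

lemma ipw_smul_right (a : ℝ) (f g : Ω → ℝ) : ipw p f (a • g) = a * ipw p f g := by
  rw [ipw_comm, ipw_smul_left, ipw_comm]

lemma ipw_self_nonneg (hp : ∀ x, 0 ≤ p x) (f : Ω → ℝ) : 0 ≤ ipw p f f :=
  Finset.sum_nonneg fun x _ => mul_nonneg (hp x) (mul_self_nonneg _)

/-- Abel summation with weights. -/
lemma abel1 (r : ℕ → ℝ) (hr : ∀ k, 0 ≤ r k) (K : ℕ) :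
    ∑ k ∈ Finset.range K, (r k - r (k+1)) ≤ r 0 := by
  rw [Finset.sum_range_sub']
  linarith [hr K]

lemma abel2 (r : ℕ → ℝ) (hr : ∀ k, 0 ≤ r k) (K : ℕ) :
    ∑ k ∈ Finset.range K, ((k:ℝ)+1) * (r k - r (k+1)) ≤ ∑ k ∈ Finset.range K, r k := by
  have : ∑ k ∈ Finset.range K, ((k:ℝ)+1) * (r k - r (k+1)) + K * r K
      = ∑ k ∈ Finset.range K, r k := by
    induction K with
    | zero => simp
    | succ K ih => rw [Finset.sum_range_succ, Finset.sum_range_succ, ← ih]; push_cast; ring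
  have h : 0 ≤ (K:ℝ) * r K := mul_nonneg (by positivity) (hr K)
  linarith

lemma abel3 (r : ℕ → ℝ) (hr : ∀ k, 0 ≤ r k) (K : ℕ) :
    ∑ k ∈ Finset.range K, ((k:ℝ)+1) * (k+2) * (r k - r (k+1))
      ≤ 2 * ∑ k ∈ Finset.range K, ((k:ℝ)+1) * r k := by
  have : ∑ k ∈ Finset.range K, ((k:ℝ)+1) * (k+2) * (r k - r (k+1)) + K * (K+1) * r K
      = 2 * ∑ k ∈ Finset.range K, ((k:ℝ)+1) * r k := by
    induction K with
    | zero => simp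
    | succ K ih =>
      rw [Finset.sum_range_succ, Finset.sum_range_succ]; push_cast; linear_combination ih
  have h : 0 ≤ (K:ℝ) * (K+1) * r K := mul_nonneg (by positivity) (hr K)
  linarith

lemma abel4 (r : ℕ → ℝ) (hr : ∀ k, 0 ≤ r k) (K : ℕ) :
    ∑ k ∈ Finset.range K, ((k:ℝ)+1) * (k+2) * (k+3) * (r k - r (k+1))
      ≤ 3 * ∑ k ∈ Finset.range K, ((k:ℝ)+1) * (k+2) * r k := by
  have : ∑ k ∈ Finset.range K, ((k:ℝ)+1) * (k+2) * (k+3) * (r k - r (k+1))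
      + K * (K+1) * (K+2) * r K
      = 3 * ∑ k ∈ Finset.range K, ((k:ℝ)+1) * (k+2) * r k := by
    induction K with
    | zero => simp
    | succ K ih =>
      rw [Finset.sum_range_succ, Finset.sum_range_succ]; push_cast; linear_combination ih
  have h : 0 ≤ (K:ℝ) * (K+1) * (K+2) * r K := mul_nonneg (by positivity) (hr K)
  linarith

variable (Q : (Ω → ℝ) →ₗ[ℝ] (Ω → ℝ))

lemma norm_second_diff (hs : ∀ f g, ipw p (Q f) g = ipw p f (Q g)) (h : Ω → ℝ) :
    ipw p (h - Q (Q h)) (h - Q (Q h)) =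
      (ipw p h h - ipw p (Q h) (Q h)) - (ipw p (Q h) (Q h) - ipw p (Q (Q h)) (Q (Q h))) := by
  have h1 : ipw p (Q (Q h)) h = ipw p (Q h) (Q h) := hs _ _
  have h2 : ipw p h (Q (Q h)) = ipw p (Q h) (Q h) := (hs _ _).symm
  simp only [ipw_sub_left, ipw_sub_right, h1, h2]

lemma norm_le_add (hp : ∀ x, 0 ≤ p x) (hpos : ∀ f, 0 ≤ ipw p f (Q f)) (h : Ω → ℝ) :
    ipw p h h ≤ ipw p (h + Q h) (h + Q h) := by
  simp only [ipw_add_left, ipw_add_right]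
  linarith [hpos h, ipw_comm p h (Q h), ipw_self_nonneg p hp (Q h)]

lemma sq_bounds (hp : ∀ x, 0 ≤ p x) (hs : ∀ f g, ipw p (Q f) g = ipw p f (Q g))
    (hpos : ∀ f, 0 ≤ ipw p f (Q f)) (hc : ∀ f, ipw p (Q f) (Q f) ≤ ipw p f f)
    (u : ℕ → Ω → ℝ) (hu : ∀ t, u (t+1) = Q (u t)) (K : ℕ) :
    ∑ t ∈ Finset.range K, ((t:ℝ)+1) * ipw p (u t - u (t+1)) (u t - u (t+1)) ≤ ipw p (u 0) (u 0) ∧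
    ∑ t ∈ Finset.range K, ((t:ℝ)+1)^3 *
      ipw p ((u t - u (t+1)) - (u (t+1) - u (t+2))) ((u t - u (t+1)) - (u (t+1) - u (t+2)))
      ≤ 6 * ipw p (u 0) (u 0) := by
  let s : (Ω → ℝ) → ℝ := fun h => ipw p h h - ipw p (Q h) (Q h)
  have hs0 : ∀ h, 0 ≤ s h := fun h => sub_nonneg.2 (hc h)
  let w : ℕ → Ω → ℝ := fun t => u t - u (t+2)
  have hw : ∀ t, w (t+1) = Q (w t) := fun t => by simp only [w, map_sub, ← hu]
  have hu2 : ∀ t, u (t+2) = Q (Q (u t)) := fun t => by rw [← hu, ← hu]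
  have hw2 : ∀ t, w (t+2) = Q (Q (w t)) := fun t => by rw [← hw, ← hw]
  have e2 : ∀ t, ipw p (w t) (w t) = s (u t) - s (u (t+1)) := fun t => by
    simp only [w, s, hu2, hu]; exact norm_second_diff p Q hs _
  have e4 : ∀ t, ipw p (w t - w (t+2)) (w t - w (t+2)) = s (w t) - s (w (t+1)) := fun t => by
    simp only [hw2, hw, s]; exact norm_second_diff p Q hs _
  have b1 := abel1 (fun t => ipw p (u t) (u t)) (fun k => ipw_self_nonneg p hp _) K
  have b2 := abel2 (fun t => s (u t)) (fun k => hs0 _) K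
  have b3 := abel3 (fun t => ipw p (w t) (w t)) (fun k => ipw_self_nonneg p hp _) K
  have b4 := abel4 (fun t => s (w t)) (fun k => hs0 _) K
  simp only [← e2] at b2
  simp only [← e4] at b4
  have c1 : ∀ t, s (u t) = ipw p (u t) (u t) - ipw p (u (t+1)) (u (t+1)) := fun t => by
    simp only [s, hu]
  have c3 : ∀ t, s (w t) = ipw p (w t) (w t) - ipw p (w (t+1)) (w (t+1)) := fun t => by
    simp only [s, hw]
  simp only [c1] at b2
  simp only [c3] at b4
  constructor
  · refine le_trans (Finset.sum_le_sum fun t _ => ?_) (b2.trans b1)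
    refine mul_le_mul_of_nonneg_left ?_ (by positivity)
    have : w t = (u t - u (t+1)) + Q (u t - u (t+1)) := by
      simp only [w, map_sub, ← hu]; abel
    rw [this]
    exact norm_le_add p Q hp hpos _
  · have : ∑ t ∈ Finset.range K, ((t:ℝ)+1)^3 *
      ipw p ((u t - u (t+1)) - (u (t+1) - u (t+2))) ((u t - u (t+1)) - (u (t+1) - u (t+2))) ≤
      ∑ k ∈ Finset.range K, ((k:ℝ)+1) * (k+2) * (k+3) * ipw p (w k - w (k+2)) (w k - w (k+2)) := by
      refine Finset.sum_le_sum fun t _ => ?_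
      refine mul_le_mul ?_ ?_ (ipw_self_nonneg p hp _) (by positivity)
      · have : (0:ℝ) ≤ t := by positivity
        nlinarith [mul_nonneg this this]
      · set e := (u t - u (t+1)) - (u (t+1) - u (t+2)) with he
        have : w t - w (t+2) = (e + Q e) + Q (e + Q e) := by
          simp only [w, he, map_sub, map_add, ← hu]
          abel
        rw [this]
        exact (norm_le_add p Q hp hpos _).trans (norm_le_add p Q hp hpos _)
    linarith

lemma pointwise_step (k a b : ℝ) (hk : 0 ≤ k) :
    (k+2)^2 * b^2 - (k+1)^2 * a^2 ≤
      3 * ((k+2) * b^2) + (k+1) * a^2 + (k+1)^3 * (a-b)^2 := by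
  have hk1 : 0 < k + 1 := by linarith
  have key : (k+1) * ((k+2)^2 * b^2 - (k+1)^2 * a^2) ≤
      (k+1) * (3 * ((k+2) * b^2) + (k+1) * a^2 + (k+1)^3 * (a-b)^2) := by
    set m := k + 1 with hm
    have h2 : k + 2 = m + 1 := by rw [hm]; ring
    rw [h2]
    have hm1 : 1 ≤ m := by linarith
    set w := b - m * (a-b) with hw
    set q := (m+1) * b + m * a with hq
    have i1 : (m+1)^2 * b^2 - m^2 * a^2 = w * q := by rw [hw, hq]; ring
    have i2 : m * (w * q) ≤ ((m * w)^2 + q^2)/2 := by nlinarith [sq_nonneg (m * w - q)]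
    have i3 : w^2 ≤ 2 * b^2 + 2 * (m^2 * (a-b)^2) := by
      nlinarith [sq_nonneg (b + m * (a-b))]
    have i4 : q^2 ≤ 2 * ((m+1)^2 * b^2) + 2 * (m^2 * a^2) := by
      nlinarith [sq_nonneg ((m+1) * b - m * a)]
    have i5 : m^2 * w^2 ≤ m^2 * (2 * b^2 + 2 * (m^2 * (a-b)^2)) :=
      mul_le_mul_of_nonneg_left i3 (sq_nonneg m)
    have i6 : 0 ≤ (m - 1) * b^2 := mul_nonneg (by linarith) (sq_nonneg b)
    have i7 : 0 ≤ (m - 1) * m * b^2 := mul_nonneg (mul_nonneg (by linarith) (by linarith)) (sq_nonneg b)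
    rw [i1]
    nlinarith
  exact le_of_mul_le_mul_left key hk1

lemma core (hp : ∀ x, 0 ≤ p x) (hp1 : ∑ x, p x = 1)
    (hs : ∀ f g, ipw p (Q f) g = ipw p f (Q g))
    (hpos : ∀ f, 0 ≤ ipw p f (Q f)) (hc : ∀ f, ipw p (Q f) (Q f) ≤ ipw p f f)
    (u : ℕ → Ω → ℝ) (hu : ∀ t, u (t+1) = Q (u t)) :
    ∑ x, p x * (⨆ t : ℕ, ((t:ℝ)+1)^2 * |u (t+1) x - u t x|^2) ≤ 11 * ipw p (u 0) (u 0) := by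
  let d : ℕ → Ω → ℝ := fun t => u t - u (t+1)
  let G : ℕ → Ω → ℝ := fun t x => 3 * (((t:ℝ)+2) * (d (t+1) x)^2) + ((t:ℝ)+1) * (d t x)^2
    + ((t:ℝ)+1)^3 * (d t x - d (t+1) x)^2
  have hG : ∀ t x, 0 ≤ G t x := fun t x => by simp only [G]; positivity
  have hb : ∀ (t : ℕ) (x : Ω), ((t:ℝ)+1)^2 * |u (t+1) x - u t x|^2
      ≤ (d 0 x)^2 + ∑ k ∈ Finset.range t, G k x := by
    intro t x
    have e : |u (t+1) x - u t x|^2 = (d t x)^2 := by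
      rw [sq_abs]; simp only [d, Pi.sub_apply]; ring
    rw [e]
    clear e
    induction t with
    | zero => simp
    | succ t ih =>
      rw [Finset.sum_range_succ]
      have := pointwise_step t (d t x) (d (t+1) x) (by positivity)
      have e3 : ((t+1:ℕ):ℝ) + 1 = t + 2 := by push_cast; ring
      rw [e3]
      simp only [G] at *
      linarith
  have hN : ∀ h : Ω → ℝ, ipw p h h = ∑ x, p x * (h x)^2 := fun h => by
    simp only [ipw, sq]
  have hsum : ∀ K, ∑ x, p x * ((d 0 x)^2 + ∑ k ∈ Finset.range K, G k x)
      ≤ 11 * ipw p (u 0) (u 0) := by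
    intro K
    obtain ⟨h1, h3⟩ := sq_bounds p Q hp hs hpos hc u hu K
    obtain ⟨h2, -⟩ := sq_bounds p Q hp hs hpos hc u hu (K+1)
    obtain ⟨h0, -⟩ := sq_bounds p Q hp hs hpos hc u hu 1
    rw [Finset.sum_range_succ'] at h2
    have hn := ipw_self_nonneg p hp (u 0 - u 1)
    have e : ∑ x, p x * ((d 0 x)^2 + ∑ k ∈ Finset.range K, G k x) =
        ipw p (d 0) (d 0) + (3 * ∑ t ∈ Finset.range K, ((t:ℝ)+2) * ipw p (d (t+1)) (d (t+1))
        + ∑ t ∈ Finset.range K, ((t:ℝ)+1) * ipw p (d t) (d t)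
        + ∑ t ∈ Finset.range K, ((t:ℝ)+1)^3 * ipw p (d t - d (t+1)) (d t - d (t+1))) := by
      simp only [mul_add, Finset.sum_add_distrib, hN]
      congr 1
      rw [Finset.mul_sum, ← Finset.sum_add_distrib, ← Finset.sum_add_distrib]
      simp only [Finset.mul_sum]
      rw [Finset.sum_comm]
      refine Finset.sum_congr rfl fun t _ => ?_
      rw [← Finset.sum_add_distrib, ← Finset.sum_add_distrib]
      refine Finset.sum_congr rfl fun x _ => ?_
      simp only [G, Pi.sub_apply]
      ring
    rw [e]
    have e2 : ∑ t ∈ Finset.range K, ((t:ℝ)+2) * ipw p (d (t+1)) (d (t+1)) =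
        ∑ k ∈ Finset.range K, (((k+1:ℕ):ℝ)+1) *
          ipw p (u (k+1) - u (k+1+1)) (u (k+1) - u (k+1+1)) := by
      refine Finset.sum_congr rfl fun t _ => ?_
      simp only [d]; push_cast; ring
    rw [e2]
    simp only [d]
    simp at h0 h2
    push_cast
    linarith
  refine le_of_forall_pos_le_add fun ε hε => ?_
  have hex : ∀ x, ∃ t : ℕ, (⨆ t : ℕ, ((t:ℝ)+1)^2 * |u (t+1) x - u t x|^2)
      ≤ ((t:ℝ)+1)^2 * |u (t+1) x - u t x|^2 + ε := by
    intro x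
    by_cases hbd : BddAbove (Set.range fun t : ℕ => ((t:ℝ)+1)^2 * |u (t+1) x - u t x|^2)
    · obtain ⟨t, ht⟩ := exists_lt_of_lt_ciSup (sub_lt_self
        (⨆ t : ℕ, ((t:ℝ)+1)^2 * |u (t+1) x - u t x|^2) hε)
      exact ⟨t, by linarith⟩
    · refine ⟨0, ?_⟩
      rw [Real.iSup_of_not_bddAbove hbd]
      positivity
  choose τ hτ using hex
  let K := Finset.univ.sup τ
  calc _ ≤ ∑ x, (p x * ((d 0 x)^2 + ∑ k ∈ Finset.range K, G k x) + p x * ε) := by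
        refine Finset.sum_le_sum fun x _ => ?_
        rw [← mul_add]
        refine mul_le_mul_of_nonneg_left ((hτ x).trans ?_) (hp x)
        have h1 := hb (τ x) x
        have h2 : ∑ k ∈ Finset.range (τ x), G k x ≤ ∑ k ∈ Finset.range K, G k x :=
          Finset.sum_le_sum_of_subset_of_nonneg
            (Finset.range_mono (Finset.le_sup (Finset.mem_univ x))) fun k _ _ => hG k x
        linarith
    _ ≤ _ := by
        rw [Finset.sum_add_distrib, ← Finset.sum_mul, hp1, one_mul]
        linarith [hsum K]

lemma P_symm (P : Matrix Ω Ω ℝ) (hr : IsReversible P p) (f g : Ω → ℝ) :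
    ipw p (P *ᵥ f) g = ipw p f (P *ᵥ g) := by
  simp only [ipw, Matrix.mulVec, dotProduct, Finset.mul_sum, Finset.sum_mul]
  rw [Finset.sum_comm]
  refine Finset.sum_congr rfl fun y _ => Finset.sum_congr rfl fun x _ => ?_
  have := hr x y
  linear_combination (f y * g x) * this

lemma P_contr (P : Matrix Ω Ω ℝ) (hp : ∀ x, 0 ≤ p x) (hP : IsStochastic P)
    (hst : p ᵥ* P = p) (f : Ω → ℝ) :
    ipw p (P *ᵥ f) (P *ᵥ f) ≤ ipw p f f := by
  have h1 : ∀ x, (P *ᵥ f) x * (P *ᵥ f) x ≤ ∑ y, P x y * (f y * f y) := by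
    intro x
    set m := (P *ᵥ f) x with hm
    have e : m = ∑ y, P x y * f y := rfl
    have h : 0 ≤ ∑ y, P x y * ((f y - m) * (f y - m)) :=
      Finset.sum_nonneg fun y _ => mul_nonneg (hP.1 x y) (mul_self_nonneg _)
    have e2 : ∑ y, P x y * ((f y - m) * (f y - m)) =
        ∑ y, P x y * (f y * f y) - 2 * m * ∑ y, P x y * f y + m * m * ∑ y, P x y := by
      rw [Finset.mul_sum, Finset.mul_sum, ← Finset.sum_sub_distrib, ← Finset.sum_add_distrib]
      exact Finset.sum_congr rfl fun y _ => by ring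
    rw [e2, hP.2 x, ← e] at h
    linarith
  calc ipw p (P *ᵥ f) (P *ᵥ f) ≤ ∑ x, p x * ∑ y, P x y * (f y * f y) :=
        Finset.sum_le_sum fun x _ => mul_le_mul_of_nonneg_left (h1 x) (hp x)
    _ = ∑ y, (p ᵥ* P) y * (f y * f y) := by
        simp only [Matrix.vecMul, dotProduct, Finset.mul_sum, Finset.sum_mul]
        rw [Finset.sum_comm]
        exact Finset.sum_congr rfl fun y _ => Finset.sum_congr rfl fun x _ => by ring
    _ = ipw p f f := by rw [hst]; rfl

lemma lazy_mulVec [DecidableEq Ω] (P : Matrix Ω Ω ℝ) (f : Ω → ℝ) :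
    lazyM P *ᵥ f = (2:ℝ)⁻¹ • (f + P *ᵥ f) := by
  rw [lazyM, Matrix.smul_mulVec, Matrix.add_mulVec, Matrix.one_mulVec]

end aux

/-- **Corollary 2.3 of Hermon–Peres, first inequality (Stein's maximal inequality for the
lazy chain).** There is an absolute constant `C` such that for every finite irreducible
reversible Markov chain and every `f : Ω → ℝ`,
`E_π[sup_{t ≥ 0} (t+1)² |Δ P_L^t f|²] ≤ C Var_π f`. -/
theorem maximal_inequality_lazy :
    ∃ C : ℝ, 0 < C ∧
      ∀ (Ω : Type) [Fintype Ω] [DecidableEq Ω]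
        (P : Matrix Ω Ω ℝ) (pi : Ω → ℝ), IsRevMC P pi →
        ∀ f : Ω → ℝ,
          ∑ x, pi x *
              (⨆ t : ℕ, ((t : ℝ) + 1) ^ 2 *
                |((lazyM P ^ (t + 1)) *ᵥ f) x - ((lazyM P ^ t) *ᵥ f) x| ^ 2) ≤
            C * ∑ x, pi x * (f x - ∑ y, pi y * f y) ^ 2 := by
  refine ⟨11, by norm_num, ?_⟩
  intro Ω _ _ P pi hM f
  obtain ⟨⟨hP, -, ⟨hp, hp1⟩, hst⟩, hr⟩ := hM
  set m := ∑ y, pi y * f y with hm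
  let F : Ω → ℝ := fun x => f x - m
  have hc := P_contr pi P hp hP hst
  have hs := P_symm pi P hr
  have hcs : ∀ g, |ipw pi g (P *ᵥ g)| ≤ ipw pi g g := by
    intro g
    have h1 := ipw_self_nonneg pi hp (g + P *ᵥ g)
    have h2 := ipw_self_nonneg pi hp (g - P *ᵥ g)
    simp only [ipw_add_left, ipw_add_right] at h1
    simp only [ipw_sub_left, ipw_sub_right] at h2
    have h3 := hs g g
    have h4 := hc g
    rw [abs_le]
    constructor <;> linarith
  have hone : ∀ t, (lazyM P ^ t) *ᵥ (fun _ => m) = fun _ => m := by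
    intro t
    induction t with
    | zero => simp
    | succ t ih =>
      rw [pow_succ, ← Matrix.mulVec_mulVec, lazy_mulVec]
      have : P *ᵥ (fun _ => m) = fun _ => m := by
        funext x
        simp only [Matrix.mulVec, dotProduct, ← Finset.sum_mul, hP.2 x, one_mul]
      rw [this]
      have : (2:ℝ)⁻¹ • ((fun _ : Ω => m) + fun _ => m) = fun _ => m := by
        funext x
        simp only [Pi.smul_apply, Pi.add_apply, smul_eq_mul]; ring
      rw [this, ih]
  have hF : ∀ t x, ((lazyM P ^ t) *ᵥ f) x = ((lazyM P ^ t) *ᵥ F) x + m := by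
    intro t x
    have : f = F + fun _ => m := by funext x; simp [F]
    conv_lhs => rw [this, Matrix.mulVec_add, hone t]
    rfl
  have := core pi (Matrix.mulVecLin (lazyM P)) hp hp1
    (by
      intro f g
      simp only [Matrix.mulVecLin_apply, lazy_mulVec, ipw_smul_left, ipw_smul_right,
        ipw_add_left, ipw_add_right, hs])
    (by
      intro g
      simp only [Matrix.mulVecLin_apply, lazy_mulVec, ipw_smul_right, ipw_add_right]
      linarith [(abs_le.1 (hcs g)).1])
    (by
      intro g
      simp only [Matrix.mulVecLin_apply, lazy_mulVec, ipw_smul_left, ipw_smul_right,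
        ipw_add_left, ipw_add_right, hs]
      linarith [(abs_le.1 (hcs g)).2, hc g, hs g (P *ᵥ g)])
    (fun t => (lazyM P ^ t) *ᵥ F)
    (by
      intro t
      simp only [Matrix.mulVecLin_apply, Matrix.mulVec_mulVec, pow_succ'])
  simp only [hF, add_sub_add_right_eq_sub]
  refine this.trans (le_of_eq ?_)
  simp only [pow_zero, Matrix.one_mulVec, ipw, F, sq]
end
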